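/- Let μ ∈ M¹₊(Ω) and let μ* be its reduced measure. Then there exists a Borel set E ⊂ Ω with H^N(E) = 0 (H^N being the N-dimensional Hausdorff measure on ℝ^N) such that (μ − μ*)(Eᶜ) = 0, i.e., μ(A) = μ*(A) for every Borel set A ⊂ Ω ∖ E. In other words, μ and μ* differ only on a set of zero N-dimensional Hausdorff measure. -/

import Mathlib

open MeasureTheory Set Filter Topology
open scoped ENNReal NNReal

noncomputable section

/-- Euclidean space `ℝ^N`. -/
abbrev Euc (N : ℕ) : Type := EuclideanSpace ℝ (Fin N)

/-- `ρ(x) = dist(x, ∂Ω)`, realized as the distance from `x` to the complement of `Ω`. -/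
def rho {N : ℕ} (Ω : Set (Euc N)) (x : Euc N) : ℝ := Metric.infDist x Ωᶜ

/-- The Laplacian (in the space variable) of `f : ℝ^N → ℝ`. -/
def lap {N : ℕ} (f : Euc N → ℝ) (x : Euc N) : ℝ :=
  ∑ i : Fin N, fderiv ℝ (fun y => fderiv ℝ f y (EuclideanSpace.single i 1)) x
    (EuclideanSpace.single i 1)

/-- The parabolic cylinder `Q_T = Ω × (0,T)`. -/
def QT {N : ℕ} (Ω : Set (Euc N)) (T : ℝ) : Set (Euc N × ℝ) := Ω ×ˢ Ioo 0 T

/-- `∂_t ζ + Δ ζ` for a function `ζ(x,t)` (curried). -/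
def heatAdj {N : ℕ} (ζ : Euc N → ℝ → ℝ) (p : Euc N × ℝ) : ℝ :=
  deriv (ζ p.1) p.2 + lap (fun y => ζ y p.2) p.1

/-- `C^{2,1}` regularity: `ζ`, `∂_t ζ`, `∇_x ζ` and `D²_x ζ` exist and are continuous. -/
def C21 {N : ℕ} (ζ : Euc N → ℝ → ℝ) : Prop :=
  Continuous (fun p : Euc N × ℝ => ζ p.1 p.2) ∧
  (∀ (x : Euc N) (t : ℝ), DifferentiableAt ℝ (ζ x) t) ∧
  Continuous (fun p : Euc N × ℝ => deriv (ζ p.1) p.2) ∧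
  (∀ (t : ℝ) (x : Euc N), DifferentiableAt ℝ (fun y => ζ y t) x) ∧
  Continuous (fun p : Euc N × ℝ => fderiv ℝ (fun y => ζ y p.2) p.1) ∧
  (∀ (t : ℝ) (x : Euc N), DifferentiableAt ℝ (fun y => fderiv ℝ (fun z => ζ z t) y) x) ∧
  Continuous (fun p : Euc N × ℝ => fderiv ℝ (fun y => fderiv ℝ (fun z => ζ z p.2) y) p.1)

/-- Membership in `C^{2,1}_{ℓ,0}(Q̄_T)` : `C^{2,1}` regularity together with
vanishing on `∂Ω × [0,T] ∪ Ω̄ × {T}`. -/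
def TestZero {N : ℕ} (Ω : Set (Euc N)) (T : ℝ) (ζ : Euc N → ℝ → ℝ) : Prop :=
  C21 ζ ∧ (∀ x ∈ frontier Ω, ∀ t ∈ Icc (0:ℝ) T, ζ x t = 0) ∧
  (∀ x ∈ closure Ω, ζ x T = 0)

/-- `g : ℝ → ℝ` continuous, nondecreasing and vanishing on `(-∞,0]`. -/
def GoodG (g : ℝ → ℝ) : Prop := Continuous g ∧ Monotone g ∧ ∀ r : ℝ, r ≤ 0 → g r = 0

/-- `μ ∈ M¹₊(Ω)` : a positive Radon measure on `Ω` with `∫_Ω ρ dμ < ∞`. -/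
def MemM1 {N : ℕ} (Ω : Set (Euc N)) (μ : Measure (Euc N)) : Prop :=
  μ Ωᶜ = 0 ∧ (∀ K : Set (Euc N), K ⊆ Ω → IsCompact K → μ K < ⊤) ∧
  (∫⁻ x, ENNReal.ofReal (rho Ω x) ∂μ) < ⊤

/-- A positive Radon measure on the (open) set `U`. -/
def RadonOn {N : ℕ} (U : Set (Euc N)) (ν : Measure (Euc N)) : Prop :=
  ν Uᶜ = 0 ∧ ∀ K : Set (Euc N), K ⊆ U → IsCompact K → ν K < ⊤

/-- Weak solution of `(P_μ)` : `∂_t u - Δu + g(u) = 0` in `Q_T`, `u = 0` on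
`∂Ω × (0,T)`, `u(·,0) = μ`. -/
def WeakSol {N : ℕ} (Ω : Set (Euc N)) (T : ℝ) (g : ℝ → ℝ) (μ : Measure (Euc N))
    (u : Euc N × ℝ → ℝ) : Prop :=
  IntegrableOn u (QT Ω T) ∧
  IntegrableOn (fun p => g (u p) * rho Ω p.1) (QT Ω T) ∧
  ∀ ζ : Euc N → ℝ → ℝ, TestZero Ω T ζ →
    (∫ p in QT Ω T,
      (-(u p) * deriv (ζ p.1) p.2 - u p * lap (fun y => ζ y p.2) p.1 + ζ p.1 p.2 * g (u p)))
      = ∫ x, ζ x 0 ∂μ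

/-- Weak subsolution of `(P_μ)`. -/
def WeakSubSol {N : ℕ} (Ω : Set (Euc N)) (T : ℝ) (g : ℝ → ℝ) (μ : Measure (Euc N))
    (u : Euc N × ℝ → ℝ) : Prop :=
  IntegrableOn u (QT Ω T) ∧
  IntegrableOn (fun p => g (u p) * rho Ω p.1) (QT Ω T) ∧
  ∀ ζ : Euc N → ℝ → ℝ, TestZero Ω T ζ → (∀ x t, 0 ≤ ζ x t) →
    (∫ p in QT Ω T,
      (-(u p) * deriv (ζ p.1) p.2 - u p * lap (fun y => ζ y p.2) p.1 + ζ p.1 p.2 * g (u p)))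
      ≤ ∫ x, ζ x 0 ∂μ

/-- `μ` is a good measure relative to `g` : `(P_μ)` admits a weak solution. -/
def GoodMeasure {N : ℕ} (Ω : Set (Euc N)) (T : ℝ) (g : ℝ → ℝ) (μ : Measure (Euc N)) : Prop :=
  ∃ u, WeakSol Ω T g μ u

/-- Essential limit of `F(t)` as `t → 0⁺` equals `L`. -/
def EssLimInit (F : ℝ → ℝ) (L : ℝ) : Prop :=
  Tendsto F ((𝓝[>] (0:ℝ)) ⊓ (ae (volume : Measure ℝ))) (𝓝 L)

/-- Essential limit of `F(t)` as `t → 0⁺` is `+∞`. -/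
def EssLimInitTop (F : ℝ → ℝ) : Prop :=
  Tendsto F ((𝓝[>] (0:ℝ)) ⊓ (ae (volume : Measure ℝ))) atTop

/-- `ν` is the initial trace of `u` on `U ⊆ Ω` : for every `φ ∈ C_c(U)`,
`ess lim_{t→0} ∫_Ω u(·,t) φ dx = ∫ φ dν`. -/
def InitTraceOn {N : ℕ} (Ω U : Set (Euc N)) (u : Euc N × ℝ → ℝ) (ν : Measure (Euc N)) : Prop :=
  ∀ φ : Euc N → ℝ, Continuous φ → HasCompactSupport φ → tsupport φ ⊆ U →
    EssLimInit (fun t => ∫ x in Ω, u (x, t) * φ x) (∫ x, φ x ∂ν)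

/-- `μstar` is the reduced measure of `μ` : the largest good measure `≤ μ`. -/
def IsReducedMeasure {N : ℕ} (Ω : Set (Euc N)) (T : ℝ) (g : ℝ → ℝ)
    (μ μstar : Measure (Euc N)) : Prop :=
  MemM1 Ω μstar ∧ μstar ≤ μ ∧ GoodMeasure Ω T g μstar ∧
  ∀ ν : Measure (Euc N), MemM1 Ω ν → GoodMeasure Ω T g ν → ν ≤ μ → ν ≤ μstar

/-- The `N`-dimensional Hausdorff measure on `ℝ^N`. -/
def hausN {N : ℕ} : Measure (Euc N) := MeasureTheory.Measure.hausdorffMeasure (N : ℝ)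

/-!
A bounded density `f dx` on `Ω` is a good measure. Granting this, let `φ` be the density of the
absolutely continuous part of `μ`: the good measures `min(φ, n) dx` lie below `μ`, hence below
`μ*` by maximality, and letting `n → ∞` gives `φ dx ≤ μ*`. So `μ` and `μ*` can differ only on the
Lebesgue-null set carrying the singular part of `μ`.

No boundary regularity is needed for bounded data. Multiplying `-∂_t ζ - Δζ` by a smoothed sign of
a test function `ζ` and integrating by parts bounds the `L¹` norms of `ζ(·,0)` and `lam ζ` by that
of `lam ζ - ∂_t ζ - Δζ`; by Hahn–Banach duality the linear equation `∂_t v - Δv + lam v = lam h` is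
then weakly solvable in `L^∞` with `v` bounded by the data. A monotone nonlinearity is added by
successive corrections, which use only existence and linearity and never uniqueness: first for
Lipschitz nonlinearities, by a contraction, then for continuous ones, through Steklov averages.
-/

section SmoothSign

theorem mul_sub_le_integral_of_monotone {p : ℝ → ℝ} (hp : Monotone p) (a b : ℝ) :
    p a * (b - a) ≤ ∫ s in a..b, p s := by
  rcases le_total a b with hab | hba
  · calc p a * (b - a) = ∫ _ in a..b, p a := by simp [mul_comm]
      _ ≤ ∫ s in a..b, p s :=
        intervalIntegral.integral_mono_on hab intervalIntegrable_const hp.intervalIntegrable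
          fun s hs => hp hs.1
  · have h : ∫ s in b..a, p s ≤ ∫ _ in b..a, p a :=
      intervalIntegral.integral_mono_on hba hp.intervalIntegrable intervalIntegrable_const
        fun s hs => hp hs.2
    rw [intervalIntegral.integral_symm]
    simp only [intervalIntegral.integral_const, smul_eq_mul] at h
    linarith

/-- A smooth nondecreasing approximation of the sign function, vanishing on `[-ε, ε]` and equal
to the sign outside `(-2ε, 2ε)`. -/
def smoothSign (ε s : ℝ) : ℝ :=
  Real.smoothTransition (s / ε - 1) - Real.smoothTransition (-s / ε - 1)

theorem contDiff_smoothSign (ε : ℝ) : ContDiff ℝ 1 (smoothSign ε) := by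
  have h := Real.smoothTransition.contDiff (n := 1)
  exact (h.comp (by fun_prop)).sub (h.comp (by fun_prop))

theorem continuous_smoothSign (ε : ℝ) : Continuous (smoothSign ε) :=
  (contDiff_smoothSign ε).continuous

theorem abs_smoothSign_le_one (ε s : ℝ) : |smoothSign ε s| ≤ 1 :=
  abs_sub_le_of_nonneg_of_le (Real.smoothTransition.nonneg _) (Real.smoothTransition.le_one _)
    (Real.smoothTransition.nonneg _) (Real.smoothTransition.le_one _)

theorem smoothSign_neg (ε s : ℝ) : smoothSign ε (-s) = -smoothSign ε s := by
  rw [smoothSign, smoothSign, neg_neg, neg_sub]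

variable {ε : ℝ} (hε : 0 < ε)
include hε

theorem monotone_smoothSign : Monotone (smoothSign ε) := fun a b hab =>
  sub_le_sub (Real.smoothTransition.monotone (by gcongr))
    (Real.smoothTransition.monotone (by gcongr))

theorem smoothSign_eq_zero {s : ℝ} (hs : |s| ≤ ε) : smoothSign ε s = 0 := by
  obtain ⟨h₁, h₂⟩ := abs_le.1 hs
  rw [smoothSign, Real.smoothTransition.zero_of_nonpos, Real.smoothTransition.zero_of_nonpos,
    sub_zero]
  · rw [sub_nonpos, div_le_one hε]; linarith
  · rw [sub_nonpos, div_le_one hε]; exact h₂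

theorem smoothSign_eq_one {s : ℝ} (hs : 2 * ε ≤ s) : smoothSign ε s = 1 := by
  rw [smoothSign, Real.smoothTransition.one_of_one_le, Real.smoothTransition.zero_of_nonpos,
    sub_zero]
  · rw [sub_nonpos, div_le_one hε]; linarith
  · rw [le_sub_iff_add_le, le_div_iff₀ hε]; linarith

theorem abs_sub_le_integral_smoothSign (s : ℝ) :
    |s| - 2 * ε ≤ ∫ r in (0 : ℝ)..s, smoothSign ε r := by
  have hint : ∀ a b, IntervalIntegrable (smoothSign ε) volume a b := fun a b =>
    (continuous_smoothSign ε).intervalIntegrable a b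
  have htangent := mul_sub_le_integral_of_monotone (monotone_smoothSign hε)
  have hzero : smoothSign ε 0 = 0 := smoothSign_eq_zero hε (by simpa using hε.le)
  have hone : smoothSign ε (2 * ε) = 1 := smoothSign_eq_one hε le_rfl
  have hright := htangent (2 * ε) s
  have hleft := htangent (-(2 * ε)) s
  have hright₀ := htangent 0 (2 * ε)
  have hleft₀ := htangent 0 (-(2 * ε))
  rw [smoothSign_neg, hone] at hleft
  rw [hone] at hright
  rw [hzero] at hright₀ hleft₀
  have hadd₁ := intervalIntegral.integral_add_adjacent_intervals (hint 0 (2 * ε)) (hint _ s)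
  have hadd₂ := intervalIntegral.integral_add_adjacent_intervals (hint 0 (-(2 * ε))) (hint _ s)
  rw [sub_le_iff_le_add]
  exact abs_le'.2 ⟨by linarith, by linarith⟩

theorem abs_sub_le_smoothSign_mul (s : ℝ) : |s| - 2 * ε ≤ smoothSign ε s * s := by
  have h := mul_sub_le_integral_of_monotone (monotone_smoothSign hε) s 0
  rw [intervalIntegral.integral_symm] at h
  linarith [abs_sub_le_integral_smoothSign hε s]

end SmoothSign

section Kato

section VanishingNearFrontier

variable {E : Type*} [NormedAddCommGroup E] [NormedSpace ℝ E] {Ω : Set E} {f : E → ℝ}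

theorem hasFDerivAt_indicator_of_eventuallyEq_zero (hΩ : IsOpen Ω) (hf : Differentiable ℝ f)
    (hfΩ : ∀ x ∈ frontier Ω, f =ᶠ[𝓝 x] 0) (x : E) :
    HasFDerivAt (Ω.indicator f) (Ω.indicator (fderiv ℝ f) x) x := by
  by_cases hx : x ∈ Ω
  · rw [indicator_of_mem hx]
    refine (hf x).hasFDerivAt.congr_of_eventuallyEq ?_
    filter_upwards [hΩ.mem_nhds hx] with y hy using indicator_of_mem hy f
  · rw [indicator_of_notMem hx]
    refine hasFDerivAt_zero_of_eventually_const 0 ?_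
    by_cases hcl : x ∈ closure Ω
    · filter_upwards [hfΩ x ⟨hcl, fun hint => hx (interior_subset hint)⟩] with y hy
      exact indicator_apply_eq_zero.2 fun _ => hy
    · filter_upwards [isClosed_closure.isOpen_compl.mem_nhds hcl] with y hy
      exact indicator_of_notMem (fun hyΩ => hy (subset_closure hyΩ)) f

theorem contDiff_fderiv_apply {z : E → ℝ} (hz : ContDiff ℝ 2 z) (e : E) :
    ContDiff ℝ 1 fun y => fderiv ℝ z y e :=
  (hz.fderiv_right (m := 1) (by norm_num)).clm_apply contDiff_const

variable {p : ℝ → ℝ} {z : E → ℝ}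

theorem continuous_comp_mul_fderiv_fderiv (hp : Continuous p) (hz : ContDiff ℝ 2 z) (e : E) :
    Continuous fun x => p (z x) * fderiv ℝ (fun y => fderiv ℝ z y e) x e :=
  (hp.comp hz.continuous).mul
    (((contDiff_fderiv_apply hz e).continuous_fderiv one_ne_zero).clm_apply continuous_const)

theorem fderiv_comp_mul_fderiv (hp : ContDiff ℝ 1 p) (hz : ContDiff ℝ 2 z) (e x : E) :
    fderiv ℝ (fun y => p (z y) * fderiv ℝ z y e) x e =
      p (z x) * fderiv ℝ (fun y => fderiv ℝ z y e) x e + deriv p (z x) * fderiv ℝ z x e ^ 2 := by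
  have hpz : HasFDerivAt (fun y => p (z y)) (deriv p (z x) • fderiv ℝ z x) x :=
    (hp.differentiable one_ne_zero (z x)).hasDerivAt.comp_hasFDerivAt x
      (hz.differentiable two_ne_zero x).hasFDerivAt
  have hk := ((contDiff_fderiv_apply hz e).differentiable one_ne_zero x).hasFDerivAt
  rw [(hpz.fun_mul hk).fderiv]
  simp only [add_apply, smul_apply, smul_eq_mul]
  ring

variable [FiniteDimensional ℝ E] [MeasurableSpace E] [BorelSpace E]

theorem integrableOn_of_continuous_of_isBounded {F : Type*} [NormedAddCommGroup F] {μ : Measure E}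
    [IsLocallyFiniteMeasure μ] {u : E → F} (hu : Continuous u) (hΩ : Bornology.IsBounded Ω) :
    IntegrableOn u Ω μ := by
  have := FiniteDimensional.proper_real E
  exact (hu.continuousOn.integrableOn_compact hΩ.isCompact_closure).mono_set subset_closure

theorem setIntegral_fderiv_eq_zero {μ : Measure E} [μ.IsAddHaarMeasure] (hΩ : IsOpen Ω)
    (hΩb : Bornology.IsBounded Ω) (hf : ContDiff ℝ 1 f)
    (hfΩ : ∀ x ∈ frontier Ω, f =ᶠ[𝓝 x] 0) (v : E) : ∫ x in Ω, fderiv ℝ f x v ∂μ = 0 := by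
  have hderiv := hasFDerivAt_indicator_of_eventuallyEq_zero hΩ (hf.differentiable one_ne_zero) hfΩ
  have hfderiv : (fun x => fderiv ℝ (Ω.indicator f) x v) =
      Ω.indicator fun x => fderiv ℝ f x v := by
    funext x
    rw [(hderiv x).fderiv]
    by_cases hx : x ∈ Ω <;> simp [hx]
  have hint : Integrable (Ω.indicator f) μ :=
    (integrableOn_of_continuous_of_isBounded hf.continuous hΩb).integrable_indicator
      hΩ.measurableSet
  have hint' : Integrable (fun x => fderiv ℝ (Ω.indicator f) x v) μ := by
    rw [hfderiv]
    exact (integrableOn_of_continuous_of_isBounded ((hf.continuous_fderiv one_ne_zero).clm_apply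
      continuous_const) hΩb).integrable_indicator hΩ.measurableSet
  have hparts := integral_mul_fderiv_eq_neg_fderiv_mul_of_integrable (μ := μ)
    (f := fun _ : E => (1 : ℝ)) (g := Ω.indicator f) (v := v) (by simp)
    (by simpa using hint') (by simpa using hint) (by simp) (fun x _ => (hderiv x).differentiableAt)
  rw [← integral_indicator hΩ.measurableSet, ← hfderiv]
  simpa using hparts

theorem setIntegral_comp_mul_fderiv_fderiv_nonpos {μ : Measure E} [μ.IsAddHaarMeasure]
    (hΩ : IsOpen Ω) (hΩb : Bornology.IsBounded Ω) (hp : ContDiff ℝ 1 p) (hpm : Monotone p)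
    (hp₀ : p =ᶠ[𝓝 0] 0) (hz : ContDiff ℝ 2 z) (hzΩ : ∀ x ∈ frontier Ω, z x = 0) (e : E) :
    ∫ x in Ω, p (z x) * fderiv ℝ (fun y => fderiv ℝ z y e) x e ∂μ ≤ 0 := by
  have hk := contDiff_fderiv_apply hz e
  have hpz : ContDiff ℝ 1 fun x => p (z x) := hp.comp (hz.of_le (by norm_num))
  have hzero : ∀ x ∈ frontier Ω, (fun y => p (z y) * fderiv ℝ z y e) =ᶠ[𝓝 x] 0 := fun x hx => by
    have hlim : Tendsto z (𝓝 x) (𝓝 0) := hzΩ x hx ▸ hz.continuous.continuousAt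
    filter_upwards [hlim.eventually hp₀] with y hy
    simp [hy]
  have hdivergence := setIntegral_fderiv_eq_zero (μ := μ) hΩ hΩb (hpz.mul hk) hzero e
  have hsquare : 0 ≤ ∫ x in Ω, deriv p (z x) * fderiv ℝ z x e ^ 2 ∂μ :=
    integral_nonneg fun x => mul_nonneg hpm.deriv_nonneg (sq_nonneg _)
  simp only [fderiv_comp_mul_fderiv hp hz] at hdivergence
  rw [integral_add] at hdivergence
  · linarith
  · exact integrableOn_of_continuous_of_isBounded
      (continuous_comp_mul_fderiv_fderiv hp.continuous hz e) hΩb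
  · exact integrableOn_of_continuous_of_isBounded
      (((hp.continuous_deriv le_rfl).comp hz.continuous).mul (hk.continuous.pow 2)) hΩb

end VanishingNearFrontier

variable {N : ℕ} {Ω : Set (Euc N)} {T : ℝ} {ζ : Euc N → ℝ → ℝ}

theorem setIntegral_comp_mul_lap_nonpos (hΩ : IsOpen Ω) (hΩb : Bornology.IsBounded Ω)
    {p : ℝ → ℝ} (hp : ContDiff ℝ 1 p) (hpm : Monotone p) (hp₀ : p =ᶠ[𝓝 0] 0)
    {z : Euc N → ℝ} (hz : ContDiff ℝ 2 z) (hzΩ : ∀ x ∈ frontier Ω, z x = 0) :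
    ∫ x in Ω, p (z x) * lap z x ≤ 0 := by
  simp only [lap, Finset.mul_sum]
  rw [integral_finsetSum _ fun i _ => integrableOn_of_continuous_of_isBounded
    (continuous_comp_mul_fderiv_fderiv hp.continuous hz _) hΩb]
  exact Finset.sum_nonpos fun i _ =>
    setIntegral_comp_mul_fderiv_fderiv_nonpos hΩ hΩb hp hpm hp₀ hz hzΩ _

theorem C21.contDiff_slice (hζ : C21 ζ) (t : ℝ) : ContDiff ℝ 2 fun x => ζ x t := by
  obtain ⟨-, -, -, hdiff, -, hdiff', hcont''⟩ := hζ
  have hfderiv : ContDiff ℝ 1 (fderiv ℝ fun x => ζ x t) :=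
    contDiff_one_iff_fderiv.2 ⟨hdiff' t, hcont''.comp (continuous_id.prodMk continuous_const)⟩
  exact contDiff_succ_iff_fderiv.2 ⟨hdiff t, by simp, hfderiv⟩

theorem C21.lap_eq_sum (hζ : C21 ζ) (t : ℝ) (x : Euc N) :
    lap (fun y => ζ y t) x = ∑ i : Fin N, fderiv ℝ (fun y => fderiv ℝ (fun z => ζ z t) y) x
      (EuclideanSpace.single i 1) (EuclideanSpace.single i 1) := by
  obtain ⟨-, -, -, -, -, hdiff', -⟩ := hζ
  simp only [lap]
  refine Finset.sum_congr rfl fun i _ => ?_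
  simp [fderiv_clm_apply (hdiff' t x) (differentiableAt_const _)]

theorem C21.continuous_lap (hζ : C21 ζ) :
    Continuous fun p : Euc N × ℝ => lap (fun y => ζ y p.2) p.1 := by
  simp only [hζ.lap_eq_sum]
  obtain ⟨-, -, -, -, -, -, hcont''⟩ := hζ
  exact continuous_finsetSum _ fun i _ =>
    (hcont''.clm_apply continuous_const).clm_apply continuous_const

theorem C21.continuous_heatAdj (hζ : C21 ζ) : Continuous (heatAdj ζ) :=
  hζ.2.2.1.add hζ.continuous_lap

theorem measurableSet_QT (hΩ : IsOpen Ω) : MeasurableSet (QT Ω T) :=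
  hΩ.measurableSet.prod measurableSet_Ioo

theorem integrableOn_QT_of_continuous {F : Euc N × ℝ → ℝ} (hF : Continuous F)
    (hΩb : Bornology.IsBounded Ω) : IntegrableOn F (QT Ω T) :=
  integrableOn_of_continuous_of_isBounded hF (hΩb.prod (Metric.isBounded_Ioo 0 T))

theorem volume_restrict_QT : (volume : Measure (Euc N × ℝ)).restrict (QT Ω T) =
    (volume.restrict Ω).prod (volume.restrict (Ioo 0 T)) := by
  rw [QT, Measure.volume_eq_prod, Measure.prod_restrict]

theorem TestZero.continuous (hζ : TestZero Ω T ζ) : Continuous fun q : Euc N × ℝ => ζ q.1 q.2 :=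
  hζ.1.1

theorem TestZero.setIntegral_comp_mul_deriv (hζ : TestZero Ω T ζ) (hΩ : IsOpen Ω)
    (hΩb : Bornology.IsBounded Ω) (hT : 0 ≤ T) {p : ℝ → ℝ} (hp : Continuous p) :
    ∫ q in QT Ω T, p (ζ q.1 q.2) * deriv (ζ q.1) q.2 = -∫ x in Ω, ∫ s in (0 : ℝ)..ζ x 0, p s := by
  obtain ⟨⟨hcont, hdiff, hcont', -⟩, -, hfinal⟩ := hζ
  have hint := integrableOn_QT_of_continuous (Ω := Ω) (T := T) ((hp.comp hcont).mul hcont') hΩb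
  rw [IntegrableOn, volume_restrict_QT] at hint
  rw [volume_restrict_QT, ← integral_neg]
  refine (integral_prod _ hint).trans (setIntegral_congr_fun hΩ.measurableSet fun x hx => ?_)
  have hsubst := intervalIntegral.integral_comp_mul_deriv (a := 0) (b := T)
    (fun t _ => (hdiff x t).hasDerivAt)
    (hcont'.comp (continuous_const.prodMk continuous_id)).continuousOn hp
  rwa [hfinal x (subset_closure hx), intervalIntegral.integral_of_le hT,
    integral_Ioc_eq_integral_Ioo, intervalIntegral.integral_symm] at hsubst

theorem TestZero.setIntegral_comp_mul_lap_nonpos (hζ : TestZero Ω T ζ) (hΩ : IsOpen Ω)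
    (hΩb : Bornology.IsBounded Ω) {p : ℝ → ℝ} (hp : ContDiff ℝ 1 p) (hpm : Monotone p)
    (hp₀ : p =ᶠ[𝓝 0] 0) :
    ∫ q in QT Ω T, p (ζ q.1 q.2) * lap (fun y => ζ y q.2) q.1 ≤ 0 := by
  have hint := integrableOn_QT_of_continuous (Ω := Ω) (T := T)
    ((hp.continuous.comp hζ.continuous).mul hζ.1.continuous_lap) hΩb
  rw [IntegrableOn, volume_restrict_QT] at hint
  rw [volume_restrict_QT]
  refine (integral_prod_symm _ hint).trans_le (setIntegral_nonpos measurableSet_Ioo fun t ht => ?_)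
  exact _root_.setIntegral_comp_mul_lap_nonpos hΩ hΩb hp hpm hp₀ (hζ.1.contDiff_slice t)
    fun x hx => hζ.2.1 x hx t (Ioo_subset_Icc_self ht)

theorem TestZero.setIntegral_integral_le (hζ : TestZero Ω T ζ) (hΩ : IsOpen Ω)
    (hΩb : Bornology.IsBounded Ω) (hT : 0 ≤ T) {p : ℝ → ℝ} (hp : ContDiff ℝ 1 p)
    (hpm : Monotone p) (hp₀ : p =ᶠ[𝓝 0] 0) :
    ∫ x in Ω, ∫ s in (0 : ℝ)..ζ x 0, p s ≤ ∫ q in QT Ω T, p (ζ q.1 q.2) * -heatAdj ζ q := by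
  have hpζ := hp.continuous.comp hζ.continuous
  have htime := hζ.setIntegral_comp_mul_deriv hΩ hΩb hT hp.continuous
  have hspace := hζ.setIntegral_comp_mul_lap_nonpos hΩ hΩb hp hpm hp₀
  simp only [mul_neg, integral_neg, heatAdj, mul_add]
  rw [integral_add]
  · linarith
  · exact integrableOn_QT_of_continuous (hpζ.mul hζ.1.2.2.1) hΩb
  · exact integrableOn_QT_of_continuous (hpζ.mul hζ.1.continuous_lap) hΩb

theorem TestZero.kato_smoothSign (hζ : TestZero Ω T ζ) (hΩ : IsOpen Ω)
    (hΩb : Bornology.IsBounded Ω) (hT : 0 ≤ T) {lam ε : ℝ} (hlam : 0 ≤ lam) (hε : 0 < ε) :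
    (∫ x in Ω, (|ζ x 0| - 2 * ε)) + lam * ∫ q in QT Ω T, (|ζ q.1 q.2| - 2 * ε) ≤
      ∫ q in QT Ω T, |lam * ζ q.1 q.2 - heatAdj ζ q| := by
  set p := smoothSign ε
  have hp : Continuous p := continuous_smoothSign ε
  have hζc := hζ.continuous
  have hζ₀ : Continuous fun x => ζ x 0 := hζc.comp (continuous_id.prodMk continuous_const)
  have hheat := hζ.1.continuous_heatAdj
  have hp₀ : p =ᶠ[𝓝 0] 0 := by
    filter_upwards [Metric.closedBall_mem_nhds 0 hε] with s hs
    exact smoothSign_eq_zero hε (by simpa using hs)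
  have hprimitive : Continuous fun x => ∫ r in (0 : ℝ)..ζ x 0, p r :=
    (intervalIntegral.continuous_primitive hp.intervalIntegrable 0).comp hζ₀
  have hint {F : Euc N × ℝ → ℝ} (hF : Continuous F) : IntegrableOn F (QT Ω T) :=
    integrableOn_QT_of_continuous hF hΩb
  have hint₀ {F : Euc N → ℝ} (hF : Continuous F) : IntegrableOn F Ω :=
    integrableOn_of_continuous_of_isBounded hF hΩb
  calc (∫ x in Ω, (|ζ x 0| - 2 * ε)) + lam * ∫ q in QT Ω T, (|ζ q.1 q.2| - 2 * ε)
      ≤ (∫ x in Ω, ∫ s in (0 : ℝ)..ζ x 0, p s) +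
          lam * ∫ q in QT Ω T, p (ζ q.1 q.2) * ζ q.1 q.2 :=
        add_le_add
          (integral_mono (hint₀ (by fun_prop)) (hint₀ hprimitive) fun x =>
            abs_sub_le_integral_smoothSign hε _)
          (mul_le_mul_of_nonneg_left (integral_mono (hint (by fun_prop)) (hint (by fun_prop))
            fun q => abs_sub_le_smoothSign_mul hε _) hlam)
    _ ≤ (∫ q in QT Ω T, p (ζ q.1 q.2) * -heatAdj ζ q) +
          lam * ∫ q in QT Ω T, p (ζ q.1 q.2) * ζ q.1 q.2 := by
        gcongr
        exact hζ.setIntegral_integral_le hΩ hΩb hT (contDiff_smoothSign ε)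
          (monotone_smoothSign hε) hp₀
    _ = ∫ q in QT Ω T, p (ζ q.1 q.2) * (lam * ζ q.1 q.2 - heatAdj ζ q) := by
        rw [← integral_const_mul, ← integral_add' (hint (by fun_prop)) (hint (by fun_prop))]
        congr with q
        simp only [Pi.add_apply]
        ring
    _ ≤ ∫ q in QT Ω T, |lam * ζ q.1 q.2 - heatAdj ζ q| :=
        integral_mono (hint (by fun_prop)) (hint (by fun_prop)) fun q =>
          (le_abs_self _).trans <| (abs_mul _ _).trans_le <|
            mul_le_of_le_one_left (abs_nonneg _) (abs_smoothSign_le_one ε _)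

theorem TestZero.kato (hζ : TestZero Ω T ζ) (hΩ : IsOpen Ω) (hΩb : Bornology.IsBounded Ω)
    (hT : 0 ≤ T) {lam : ℝ} (hlam : 0 ≤ lam) :
    (∫ x in Ω, |ζ x 0|) + lam * ∫ q in QT Ω T, |ζ q.1 q.2| ≤
      ∫ q in QT Ω T, |lam * ζ q.1 q.2 - heatAdj ζ q| := by
  have hζc := hζ.continuous
  have hζ₀ : Continuous fun x => |ζ x 0| :=
    (hζc.comp (continuous_id.prodMk continuous_const)).abs
  have hkato : ∀ ε > 0, (∫ x in Ω, |ζ x 0|) + lam * (∫ q in QT Ω T, |ζ q.1 q.2|) -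
      ε * (2 * volume.real Ω + lam * (2 * volume.real (QT Ω T))) ≤
      ∫ q in QT Ω T, |lam * ζ q.1 q.2 - heatAdj ζ q| := fun ε hε => by
    refine le_trans (le_of_eq ?_) (hζ.kato_smoothSign hΩ hΩb hT hlam hε)
    rw [integral_sub (integrableOn_of_continuous_of_isBounded hζ₀ hΩb)
        (integrableOn_of_continuous_of_isBounded continuous_const hΩb),
      integral_sub (integrableOn_QT_of_continuous hζc.abs hΩb)
        (integrableOn_QT_of_continuous continuous_const hΩb)]
    simp only [setIntegral_const, smul_eq_mul]
    ring
  refine le_of_tendsto (x := 𝓝[>] (0 : ℝ)) ?_ (eventually_mem_nhdsWithin.mono hkato)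
  refine tendsto_nhdsWithin_of_tendsto_nhds (Continuous.tendsto' (by fun_prop) _ _ (by simp))

end Kato

section Duality

theorem exists_strongDual_comp_eq {E V : Type*} [AddCommGroup E] [Module ℝ E] [TopologicalSpace E]
    [PolynormableSpace ℝ E] [AddCommGroup V] [Module ℝ V]
    (A : V →ₗ[ℝ] E) (L : V →ₗ[ℝ] ℝ) {p : Seminorm ℝ E} (hp : Continuous p)
    (hL : ∀ z, |L z| ≤ p (A z)) :
    ∃ φ : StrongDual ℝ E, (∀ z, φ (A z) = L z) ∧ ∀ w, |φ w| ≤ p w := by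
  have hker : L ∈ (LinearMap.ker A).dualAnnihilator :=
    (Submodule.mem_dualAnnihilator L).2 fun z hz => abs_nonpos_iff.1 <| by
      simpa [LinearMap.mem_ker.1 hz] using hL z
  rw [← LinearMap.range_dualMap_eq_dualAnnihilator_ker] at hker
  obtain ⟨ψ, rfl⟩ := hker
  obtain ⟨φ, hφ, hφp⟩ := Module.Dual.exists_continuous_extension_of_le_seminorm_real
    (LinearMap.range A) (ψ.domRestrict (LinearMap.range A)) hp fun ⟨_, z, hz⟩ => by
      subst hz
      exact (le_abs_self _).trans (hL z)
  exact ⟨φ, fun z => hφ ⟨A z, z, rfl⟩, hφp⟩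

variable {α : Type*} [MeasurableSpace α] {m : Measure α} [IsFiniteMeasure m]

theorem ae_abs_le_of_forall_abs_setIntegral_le {v : α → ℝ} (hv : Integrable v m) {B : ℝ}
    (h : ∀ s, MeasurableSet s → |∫ x in s, v x ∂m| ≤ B * m.real s) : ∀ᵐ x ∂m, |v x| ≤ B := by
  have hle : ∀ᵐ x ∂m, v x ≤ B := ae_le_of_forall_setIntegral_le hv (integrable_const B)
    fun s hs _ => by simpa [mul_comm] using (le_abs_self _).trans (h s hs)
  have hge : ∀ᵐ x ∂m, -B ≤ v x := ae_le_of_forall_setIntegral_le (integrable_const (-B)) hv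
    fun s hs _ => by simpa [mul_comm] using (abs_le.1 (h s hs)).1
  filter_upwards [hge, hle] with x h₁ h₂ using abs_le.2 ⟨h₁, h₂⟩

variable (m) in
/-- The `L¹` norm as a seminorm on `L²` of a finite measure: the norm of `L¹` pulled back by
Hölder multiplication by the constant `1 ∈ L²`. -/
def lpOneSeminorm : Seminorm ℝ (Lp ℝ 2 m) :=
  (normSeminorm ℝ (Lp ℝ 1 m)).comp
    ((ContinuousLinearMap.mul ℝ ℝ).holderL m 2 2 1 (Lp.const 2 m 1)).toLinearMap

theorem continuous_lpOneSeminorm : Continuous (lpOneSeminorm m) :=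
  continuous_norm.comp
    ((ContinuousLinearMap.mul ℝ ℝ).holderL m 2 2 1 (Lp.const 2 m 1)).continuous

theorem lpOneSeminorm_apply (w : Lp ℝ 2 m) : lpOneSeminorm m w = ∫ x, |w x| ∂m := by
  refine (L1.norm_eq_integral_norm _).trans (integral_congr_ae ?_)
  filter_upwards [(ContinuousLinearMap.mul ℝ ℝ).coeFn_holder (r := 1) (Lp.const 2 m 1) w,
    Lp.coeFn_const (p := 2) (μ := m) (1 : ℝ)] with x hx h1
  rw [Real.norm_eq_abs]
  congr 1
  exact hx.trans (by rw [h1]; exact one_mul _)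

/-- The representing function comes from the Riesz theorem in `L²`; testing it against indicators
gives the uniform bound. -/
theorem exists_bounded_integral_mul_eq_of_lp {V : Type*} [AddCommGroup V] [Module ℝ V]
    (A : V →ₗ[ℝ] Lp ℝ 2 m) (L : V →ₗ[ℝ] ℝ) {B : ℝ≥0} (hL : ∀ z, |L z| ≤ B * ∫ x, |A z x| ∂m) :
    ∃ v : α → ℝ, AEStronglyMeasurable v m ∧ (∀ᵐ x ∂m, |v x| ≤ B) ∧
      ∀ z, L z = ∫ x, v x * A z x ∂m := by
  obtain ⟨φ, hφA, hφ⟩ := exists_strongDual_comp_eq A L (p := B • lpOneSeminorm m)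
    (continuous_lpOneSeminorm.const_smul B) fun z => by
      simpa [lpOneSeminorm_apply, NNReal.smul_def] using hL z
  set v := (InnerProductSpace.toDual ℝ (Lp ℝ 2 m)).symm φ
  have hv (w : Lp ℝ 2 m) : φ w = ∫ x, v x * w x ∂m := by
    rw [← InnerProductSpace.toDual_symm_apply (y := φ), L2.inner_def]
    simp [v, mul_comm]
  refine ⟨v, Lp.aestronglyMeasurable v, ?_, fun z => by rw [← hφA, hv]⟩
  refine ae_abs_le_of_forall_abs_setIntegral_le ((Lp.memLp v).integrable one_le_two) fun s hs => ?_
  have hind := indicatorConstLp_coeFn (p := 2) (hs := hs) (hμs := measure_ne_top m s) (c := (1 : ℝ))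
  have hφs : φ (indicatorConstLp 2 hs (measure_ne_top m s) 1) = ∫ x in s, v x ∂m := by
    rw [hv, ← integral_indicator hs]
    refine integral_congr_ae ?_
    filter_upwards [hind] with x hx
    by_cases hxs : x ∈ s <;> simp [hx, hxs]
  have hnorm : ∫ x, |indicatorConstLp 2 hs (measure_ne_top m s) (1 : ℝ) x| ∂m = m.real s := by
    rw [← integral_indicator_one hs]
    refine integral_congr_ae ?_
    filter_upwards [hind] with x hx
    by_cases hxs : x ∈ s <;> simp [hx, hxs]
  simpa [hφs, lpOneSeminorm_apply, hnorm, NNReal.smul_def] using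
    hφ (indicatorConstLp 2 hs (measure_ne_top m s) 1)

theorem exists_bounded_integral_mul_eq {V : Type*} [AddCommGroup V] [Module ℝ V]
    (A : V →ₗ[ℝ] α → ℝ) (hA : ∀ z, MemLp (A z) 2 m) (L : V →ₗ[ℝ] ℝ) {B : ℝ≥0}
    (hL : ∀ z, |L z| ≤ B * ∫ x, |A z x| ∂m) :
    ∃ v : α → ℝ, AEStronglyMeasurable v m ∧ (∀ᵐ x ∂m, |v x| ≤ B) ∧
      ∀ z, L z = ∫ x, v x * A z x ∂m := by
  let A₂ : V →ₗ[ℝ] Lp ℝ 2 m :=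
    { toFun := fun z => (hA z).toLp
      map_add' := fun y z => by simp only [map_add, ← MemLp.toLp_add]
      map_smul' := fun c z => by simp only [map_smul, ← MemLp.toLp_const_smul, RingHom.id_apply] }
  have hA₂ (z : V) : A₂ z =ᵐ[m] A z := (hA z).coeFn_toLp
  obtain ⟨v, hvm, hvB, hv⟩ := exists_bounded_integral_mul_eq_of_lp A₂ L fun z =>
    (hL z).trans_eq <| congrArg _ <| integral_congr_ae <| by
      filter_upwards [hA₂ z] with x hx using by rw [hx]
  refine ⟨v, hvm, hvB, fun z => (hv z).trans (integral_congr_ae ?_)⟩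
  filter_upwards [hA₂ z] with x hx using by rw [hx]

end Duality

section TestSpace

variable {N : ℕ} {Ω : Set (Euc N)} {T : ℝ} {ζ ξ : Euc N → ℝ → ℝ}

theorem C21.add (hζ : C21 ζ) (hξ : C21 ξ) : C21 (ζ + ξ) := by
  obtain ⟨h₁, h₂, h₃, h₄, h₅, h₆, h₇⟩ := hζ
  obtain ⟨k₁, k₂, k₃, k₄, k₅, k₆, k₇⟩ := hξ
  have hgrad (t : ℝ) : (fun x => fderiv ℝ (fun y => (ζ + ξ) y t) x) =
      fun x => fderiv ℝ (fun y => ζ y t) x + fderiv ℝ (fun y => ξ y t) x :=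
    funext fun x => fderiv_fun_add (h₄ t x) (k₄ t x)
  refine ⟨h₁.add k₁, fun x t => (h₂ x t).add (k₂ x t), ?_, fun t x => (h₄ t x).add (k₄ t x), ?_,
    fun t x => ?_, ?_⟩
  · exact (h₃.add k₃).congr fun p => (deriv_add (h₂ p.1 p.2) (k₂ p.1 p.2)).symm
  · exact (h₅.add k₅).congr fun p => (congrFun (hgrad p.2) p.1).symm
  · rw [hgrad]
    exact (h₆ t x).add (k₆ t x)
  · refine (h₇.add k₇).congr fun p => ?_
    rw [hgrad]
    exact (fderiv_fun_add (h₆ p.2 p.1) (k₆ p.2 p.1)).symm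

theorem C21.heatAdj_add (hζ : C21 ζ) (hξ : C21 ξ) (p : Euc N × ℝ) :
    heatAdj (ζ + ξ) p = heatAdj ζ p + heatAdj ξ p := by
  have hderiv : deriv ((ζ + ξ) p.1) p.2 = deriv (ζ p.1) p.2 + deriv (ξ p.1) p.2 :=
    deriv_add (hζ.2.1 p.1 p.2) (hξ.2.1 p.1 p.2)
  have hgrad : (fun x => fderiv ℝ (fun y => (ζ + ξ) y p.2) x) =
      fun x => fderiv ℝ (fun y => ζ y p.2) x + fderiv ℝ (fun y => ξ y p.2) x :=
    funext fun x => fderiv_fun_add (hζ.2.2.2.1 p.2 x) (hξ.2.2.2.1 p.2 x)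
  obtain ⟨-, -, -, -, -, h₆, -⟩ := id hζ
  obtain ⟨-, -, -, -, -, k₆, -⟩ := id hξ
  simp only [heatAdj, (hζ.add hξ).lap_eq_sum, hζ.lap_eq_sum, hξ.lap_eq_sum, hderiv, hgrad,
    fderiv_fun_add (h₆ p.2 p.1) (k₆ p.2 p.1), add_apply, Finset.sum_add_distrib]
  ring

theorem C21.fderiv_mul_left (hζ : C21 ζ) (a : ℝ → ℝ) (t : ℝ) (x : Euc N) :
    fderiv ℝ (fun y => a t * ζ y t) x = a t • fderiv ℝ (fun y => ζ y t) x :=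
  fderiv_const_mul (hζ.2.2.2.1 t x) (a t)

theorem C21.fderiv_fderiv_mul_left (hζ : C21 ζ) (a : ℝ → ℝ) (t : ℝ) (x : Euc N) :
    fderiv ℝ (fun z => fderiv ℝ (fun y => a t * ζ y t) z) x =
      a t • fderiv ℝ (fun z => fderiv ℝ (fun y => ζ y t) z) x := by
  simp only [hζ.fderiv_mul_left]
  exact fderiv_const_smul (hζ.2.2.2.2.2.1 t x) (a t)

theorem C21.mul_left (hζ : C21 ζ) {a : ℝ → ℝ} (ha : ContDiff ℝ 1 a) :
    C21 fun x t => a t * ζ x t := by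
  obtain ⟨h₁, h₂, h₃, h₄, h₅, h₆, h₇⟩ := id hζ
  have ha' : Differentiable ℝ a := ha.differentiable one_ne_zero
  have haf : Continuous fun p : Euc N × ℝ => a p.2 := ha.continuous.comp continuous_snd
  refine ⟨haf.mul h₁, fun x t => (ha' t).mul (h₂ x t), ?_, fun t x => (h₄ t x).const_mul _,
    ?_, fun t x => ?_, ?_⟩
  · have hda : Continuous fun p : Euc N × ℝ => deriv a p.2 :=
      (ha.continuous_deriv le_rfl).comp continuous_snd
    exact ((hda.mul h₁).add (haf.mul h₃)).congr fun p =>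
      (deriv_fun_mul (ha' p.2) (h₂ p.1 p.2)).symm
  · exact (haf.smul h₅).congr fun p => (hζ.fderiv_mul_left a p.2 p.1).symm
  · simp only [hζ.fderiv_mul_left]
    exact (h₆ t x).const_smul (a t)
  · exact (haf.smul h₇).congr fun p => (hζ.fderiv_fderiv_mul_left a p.2 p.1).symm

theorem C21.heatAdj_mul_left (hζ : C21 ζ) {a : ℝ → ℝ} (ha : ContDiff ℝ 1 a) (p : Euc N × ℝ) :
    heatAdj (fun x t => a t * ζ x t) p = deriv a p.2 * ζ p.1 p.2 + a p.2 * heatAdj ζ p := by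
  have hderiv : deriv (fun t => a t * ζ p.1 t) p.2 =
      deriv a p.2 * ζ p.1 p.2 + a p.2 * deriv (ζ p.1) p.2 :=
    deriv_fun_mul (ha.differentiable one_ne_zero p.2) (hζ.2.1 p.1 p.2)
  simp only [heatAdj, (hζ.mul_left ha).lap_eq_sum, hζ.lap_eq_sum, hderiv,
    hζ.fderiv_fderiv_mul_left, smul_apply, smul_eq_mul, ← Finset.mul_sum]
  ring

theorem TestZero.add (hζ : TestZero Ω T ζ) (hξ : TestZero Ω T ξ) : TestZero Ω T (ζ + ξ) :=
  ⟨hζ.1.add hξ.1, fun x hx t ht => by simp [hζ.2.1 x hx t ht, hξ.2.1 x hx t ht],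
    fun x hx => by simp [hζ.2.2 x hx, hξ.2.2 x hx]⟩

theorem TestZero.mul_left (hζ : TestZero Ω T ζ) {a : ℝ → ℝ} (ha : ContDiff ℝ 1 a) :
    TestZero Ω T fun x t => a t * ζ x t :=
  ⟨hζ.1.mul_left ha, fun x hx t ht => by simp [hζ.2.1 x hx t ht],
    fun x hx => by simp [hζ.2.2 x hx]⟩

theorem testZero_zero : TestZero Ω T 0 := by
  simp [TestZero, C21, Pi.zero_def, continuous_const]

variable (Ω T) in
/-- The vector space `C^{2,1}_{ℓ,0}(Q̄_T)` of test functions. -/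
def testSpace : Submodule ℝ (Euc N → ℝ → ℝ) where
  carrier := {ζ | TestZero Ω T ζ}
  add_mem' hζ hξ := TestZero.add hζ hξ
  zero_mem' := testZero_zero
  smul_mem' c _ hζ := TestZero.mul_left hζ (a := fun _ => c) contDiff_const

end TestSpace

section LpTop

variable {α : Type*} [MeasurableSpace α] {m : Measure α}

theorem norm_lpTop_le_iff {v : Lp ℝ ∞ m} {C : ℝ} (hC : 0 ≤ C) :
    ‖v‖ ≤ C ↔ ∀ᵐ x ∂m, |v x| ≤ C := by
  constructor
  · intro h
    filter_upwards [ae_le_lpNorm_exponent_top (Lp.memLp v)] with x hx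
    rw [Lp.norm_def, toReal_eLpNorm (Lp.aestronglyMeasurable v)] at h
    exact hx.trans h
  · intro h
    rw [Lp.norm_def, eLpNorm_exponent_top]
    exact ENNReal.toReal_le_of_le_ofReal hC (eLpNormEssSup_le_of_ae_bound h)

theorem continuous_integral_lpTop_mul {φ : α → ℝ} (hφ : Integrable φ m) :
    Continuous fun v : Lp ℝ ∞ m => ∫ x, v x * φ x ∂m := by
  refine ((((ContinuousLinearMap.mul ℝ ℝ).lpPairing m ∞ 1).flip (hφ.toL1 φ)).continuous).congr
    fun v => ?_
  rw [ContinuousLinearMap.flip_apply, ContinuousLinearMap.lpPairing_eq_integral]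
  refine integral_congr_ae ?_
  filter_upwards [hφ.coeFn_toL1] with x hx
  rw [hx, ContinuousLinearMap.mul_apply']

end LpTop

section HeatProblem

variable {N : ℕ} {Ω : Set (Euc N)} {T : ℝ} {f f' : Euc N → ℝ} {v v' w w' : Euc N × ℝ → ℝ}

/-- Weak formulation of the linear problem `∂ₜv - Δv = w` in `Q_T`, `v = 0` on `∂Ω × (0,T)`,
`v(·,0) = f`. -/
def IsHeatSol (Ω : Set (Euc N)) (T : ℝ) (f : Euc N → ℝ) (v w : Euc N × ℝ → ℝ) : Prop :=
  ∀ ζ, TestZero Ω T ζ → ∫ p in QT Ω T, v p * -heatAdj ζ p =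
    (∫ x in Ω, f x * ζ x 0) + ∫ p in QT Ω T, w p * ζ p.1 p.2

theorem IsHeatSol.congr (h : IsHeatSol Ω T f v w) (hv : v =ᵐ[volume.restrict (QT Ω T)] v')
    (hw : w =ᵐ[volume.restrict (QT Ω T)] w') : IsHeatSol Ω T f v' w' := fun ζ hζ => by
  rw [← integral_congr_ae (hv.fun_mul (ae_eq_refl fun p => -heatAdj ζ p)),
    ← integral_congr_ae (hw.fun_mul (ae_eq_refl fun p => ζ p.1 p.2))]
  exact h ζ hζ

theorem TestZero.continuous_zero {ζ : Euc N → ℝ → ℝ} (hζ : TestZero Ω T ζ) :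
    Continuous fun x => ζ x 0 :=
  hζ.continuous.comp (continuous_id.prodMk continuous_const)

theorem integrable_mul_of_memLp_top {E : Type*} [MeasurableSpace E] {m : Measure E} {u φ : E → ℝ}
    (hu : MemLp u ∞ m) (hφ : Integrable φ m) : Integrable (fun x => u x * φ x) m :=
  hu.integrable_mul (memLp_one_iff_integrable.2 hφ)

theorem IsHeatSol.add (hΩb : Bornology.IsBounded Ω) (h : IsHeatSol Ω T f v w)
    (h' : IsHeatSol Ω T f' v' w') (hf : MemLp f ∞ (volume.restrict Ω))
    (hf' : MemLp f' ∞ (volume.restrict Ω)) (hv : MemLp v ∞ (volume.restrict (QT Ω T)))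
    (hv' : MemLp v' ∞ (volume.restrict (QT Ω T))) (hw : MemLp w ∞ (volume.restrict (QT Ω T)))
    (hw' : MemLp w' ∞ (volume.restrict (QT Ω T))) :
    IsHeatSol Ω T (f + f') (v + v') (w + w') := fun ζ hζ => by
  have hheat : IntegrableOn (fun p => -heatAdj ζ p) (QT Ω T) :=
    integrableOn_QT_of_continuous hζ.1.continuous_heatAdj.neg hΩb
  have hint := integrableOn_QT_of_continuous (T := T) hζ.continuous hΩb
  have hint₀ := integrableOn_of_continuous_of_isBounded (μ := volume) hζ.continuous_zero hΩb
  simp only [Pi.add_apply, add_mul]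
  rw [integral_add (integrable_mul_of_memLp_top hv hheat) (integrable_mul_of_memLp_top hv' hheat),
    integral_add (integrable_mul_of_memLp_top hf hint₀) (integrable_mul_of_memLp_top hf' hint₀),
    integral_add (integrable_mul_of_memLp_top hw hint) (integrable_mul_of_memLp_top hw' hint),
    h ζ hζ, h' ζ hζ]
  ring

variable (Ω T) in
/-- The operator `ζ ↦ lam ζ - ∂ₜζ - Δζ` on test functions. -/
def adjHeatOp (lam : ℝ) : testSpace Ω T →ₗ[ℝ] Euc N × ℝ → ℝ where
  toFun ζ p := lam * ζ.1 p.1 p.2 - heatAdj ζ.1 p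
  map_add' ζ ξ := funext fun p => by
    simp only [Submodule.coe_add, ζ.2.1.heatAdj_add ξ.2.1, Pi.add_apply]
    ring
  map_smul' c ζ := funext fun p => by
    have hheat : heatAdj (c • ζ.1) p = c * heatAdj ζ.1 p :=
      (ζ.2.1.heatAdj_mul_left (a := fun _ => c) contDiff_const p).trans (by simp)
    simp only [Submodule.coe_smul, hheat, Pi.smul_apply, smul_eq_mul, RingHom.id_apply]
    ring

/-- The functional `ζ ↦ ∫_Ω f ζ(·,0) + ∫_{Q_T} w ζ` on test functions. -/
def dataFunctional (hΩb : Bornology.IsBounded Ω) (hf : MemLp f ∞ (volume.restrict Ω))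
    (hw : MemLp w ∞ (volume.restrict (QT Ω T))) : testSpace Ω T →ₗ[ℝ] ℝ where
  toFun ζ := (∫ x in Ω, f x * ζ.1 x 0) + ∫ p in QT Ω T, w p * ζ.1 p.1 p.2
  map_add' ζ ξ := by
    have hint (ζ : testSpace Ω T) := integrable_mul_of_memLp_top hw
      (integrableOn_QT_of_continuous ζ.2.continuous hΩb)
    have hint₀ (ζ : testSpace Ω T) := integrable_mul_of_memLp_top hf
      (integrableOn_of_continuous_of_isBounded ζ.2.continuous_zero hΩb)
    simp only [Submodule.coe_add, Pi.add_apply, mul_add]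
    rw [integral_add (hint₀ ζ) (hint₀ ξ), integral_add (hint ζ) (hint ξ)]
    ring
  map_smul' c ζ := by
    simp only [Submodule.coe_smul, Pi.smul_apply, smul_eq_mul, mul_left_comm _ c,
      integral_const_mul, RingHom.id_apply]
    ring

theorem abs_integral_mul_le {E : Type*} [MeasurableSpace E] {m : Measure E} {u φ : E → ℝ} {B : ℝ}
    (hu : ∀ᵐ x ∂m, |u x| ≤ B) (hφ : Integrable φ m) : |∫ x, u x * φ x ∂m| ≤ B * ∫ x, |φ x| ∂m := by
  rw [← integral_const_mul, ← Real.norm_eq_abs]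
  refine norm_integral_le_of_norm_le (hφ.abs.const_mul B) ?_
  filter_upwards [hu] with x hx
  rw [Real.norm_eq_abs, abs_mul]
  gcongr

theorem memLp_of_continuous_of_isBounded {E : Type*} [MeasurableSpace E] [PseudoMetricSpace E]
    [ProperSpace E] [BorelSpace E] {m : Measure E} [IsFiniteMeasureOnCompacts m] {s : Set E}
    (hs : Bornology.IsBounded s) {u : E → ℝ} (hu : Continuous u) (p : ℝ≥0∞) :
    MemLp u p (m.restrict s) := by
  obtain ⟨C, hC⟩ := hs.isCompact_closure.exists_bound_of_continuousOn hu.continuousOn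
  have : IsFiniteMeasure (m.restrict (closure s)) :=
    isFiniteMeasure_restrict.2 hs.closure.measure_lt_top.ne
  exact (MemLp.of_bound hu.aestronglyMeasurable C
    (ae_restrict_of_forall_mem measurableSet_closure hC)).mono_measure
      (Measure.restrict_mono subset_closure le_rfl)

theorem abs_dataFunctional_le (hΩ : IsOpen Ω) (hΩb : Bornology.IsBounded Ω) (hT : 0 ≤ T) {lam B : ℝ}
    (hlam : 0 ≤ lam) (hB : 0 ≤ B) {h : Euc N × ℝ → ℝ} (hf : MemLp f ∞ (volume.restrict Ω))
    (hfB : ∀ᵐ x ∂volume.restrict Ω, |f x| ≤ B)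
    (hh : MemLp (fun p => lam * h p) ∞ (volume.restrict (QT Ω T)))
    (hhB : ∀ᵐ p ∂volume.restrict (QT Ω T), |h p| ≤ B) (ζ : testSpace Ω T) :
    |dataFunctional hΩb hf hh ζ| ≤ B * ∫ p in QT Ω T, |adjHeatOp Ω T lam ζ p| := by
  have hlamh : ∀ᵐ p ∂volume.restrict (QT Ω T), |lam * h p| ≤ lam * B := by
    filter_upwards [hhB] with p hp
    rw [abs_mul, abs_of_nonneg hlam]
    gcongr
  calc |dataFunctional hΩb hf hh ζ|
      ≤ |∫ x in Ω, f x * ζ.1 x 0| + |∫ p in QT Ω T, lam * h p * ζ.1 p.1 p.2| := abs_add_le _ _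
    _ ≤ B * (∫ x in Ω, |ζ.1 x 0|) + lam * B * ∫ p in QT Ω T, |ζ.1 p.1 p.2| :=
        add_le_add
          (abs_integral_mul_le hfB
            (integrableOn_of_continuous_of_isBounded ζ.2.continuous_zero hΩb))
          (abs_integral_mul_le hlamh (integrableOn_QT_of_continuous ζ.2.continuous hΩb))
    _ = B * ((∫ x in Ω, |ζ.1 x 0|) + lam * ∫ p in QT Ω T, |ζ.1 p.1 p.2|) := by ring
    _ ≤ B * ∫ p in QT Ω T, |adjHeatOp Ω T lam ζ p| :=
        mul_le_mul_of_nonneg_left (ζ.2.kato hΩ hΩb hT hlam) hB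

/-- The Kato inequality for test functions is exactly the a priori estimate which, by duality,
yields a solution bounded by the data. -/
theorem exists_isHeatSol (hΩ : IsOpen Ω) (hΩb : Bornology.IsBounded Ω) (hT : 0 ≤ T) {lam : ℝ}
    (hlam : 0 ≤ lam) {B : ℝ≥0} (hf : AEStronglyMeasurable f (volume.restrict Ω))
    (hfB : ∀ᵐ x ∂volume.restrict Ω, |f x| ≤ B) {h : Euc N × ℝ → ℝ}
    (hh : AEStronglyMeasurable h (volume.restrict (QT Ω T)))
    (hhB : ∀ᵐ p ∂volume.restrict (QT Ω T), |h p| ≤ B) :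
    ∃ v : Euc N × ℝ → ℝ, AEStronglyMeasurable v (volume.restrict (QT Ω T)) ∧
      (∀ᵐ p ∂volume.restrict (QT Ω T), |v p| ≤ B) ∧
      IsHeatSol Ω T f v fun p => lam * (h p - v p) := by
  have hQb : Bornology.IsBounded (QT Ω T) := hΩb.prod (Metric.isBounded_Ioo 0 T)
  have : IsFiniteMeasure (volume.restrict (QT Ω T)) :=
    isFiniteMeasure_restrict.2 hQb.measure_lt_top.ne
  have hw : MemLp (fun p => lam * h p) ∞ (volume.restrict (QT Ω T)) :=
    (memLp_top_of_bound hh B hhB).const_mul lam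
  obtain ⟨v, hvm, hvB, hv⟩ := exists_bounded_integral_mul_eq (adjHeatOp Ω T lam)
    (fun ζ => memLp_of_continuous_of_isBounded hQb
      ((ζ.2.continuous.const_mul lam).sub ζ.2.1.continuous_heatAdj) 2) _
    (abs_dataFunctional_le hΩ hΩb hT hlam B.2 (memLp_top_of_bound hf B hfB) hfB hw hhB)
  refine ⟨v, hvm, hvB, fun ζ hζ => ?_⟩
  have hv_top := memLp_top_of_bound hvm B hvB
  have hint := integrableOn_QT_of_continuous (T := T) hζ.continuous hΩb
  have hadj : IntegrableOn (fun p => lam * ζ p.1 p.2 - heatAdj ζ p) (QT Ω T) :=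
    (hint.const_mul lam).sub (integrableOn_QT_of_continuous hζ.1.continuous_heatAdj hΩb)
  have hvζ : (∫ x in Ω, f x * ζ x 0) + ∫ p in QT Ω T, lam * h p * ζ p.1 p.2 =
      ∫ p in QT Ω T, v p * (lam * ζ p.1 p.2 - heatAdj ζ p) := hv ⟨ζ, hζ⟩
  have hsub : ∫ p in QT Ω T, lam * (h p - v p) * ζ p.1 p.2 =
      (∫ p in QT Ω T, lam * h p * ζ p.1 p.2) - ∫ p in QT Ω T, v p * (lam * ζ p.1 p.2) := by
    rw [← integral_sub (integrable_mul_of_memLp_top hw hint)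
      (integrable_mul_of_memLp_top hv_top (hint.const_mul lam))]
    congr with p
    ring
  rw [hsub, ← add_sub_assoc, hvζ, ← integral_sub (integrable_mul_of_memLp_top hv_top hadj)
    (integrable_mul_of_memLp_top hv_top (hint.const_mul lam))]
  congr with p
  ring

end HeatProblem

section MAccretive

variable {X : Type*} [NormedAddCommGroup X] [NormedSpace ℝ X]

/-- A weak form of m-accretivity for a closed additive relation `R`, read as the graph of an
operator `z ↦ w`: each resolvent equation `z + lam⁻¹ w = h`, `(z, w) ∈ R`, has a solution with
`‖z‖ ≤ ‖h‖`. Uniqueness of `z` is not required, nor of `w` given `z`. -/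
structure IsMAccretive (R : AddSubmonoid (X × X)) : Prop where
  isClosed : IsClosed (R : Set (X × X))
  exists_resolvent : ∀ lam : ℝ, 0 < lam → ∀ h, ∃ z, ‖z‖ ≤ ‖h‖ ∧ (z, lam • (h - z)) ∈ R

variable {R : AddSubmonoid (X × X)} {F : X → X}

/-- Each step solves the resolvent equation for the correction `y (n + 2) - y (n + 1)`, so that
only additivity of `R` is needed to pass from one iterate to the next. -/
theorem IsMAccretive.exists_seq_of_contracting (hR : IsMAccretive R) {lam : ℝ} (hlam : 0 < lam)
    {G : X → X} {K : ℝ≥0} (hG : LipschitzWith K G) :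
    ∃ y : ℕ → X, y 0 = 0 ∧ (∀ n, (y (n + 1), lam • (G (y n) - y (n + 1))) ∈ R) ∧
      ∀ n, ‖y (n + 1) - y n‖ ≤ ‖G 0‖ * K ^ n := by
  choose S hS hSR using hR.exists_resolvent lam hlam
  let p : ℕ → X × X := fun n =>
    (fun q : X × X => (q.2, q.2 + S (G q.2 - G q.1)))^[n] (0, S (G 0))
  have hp (n : ℕ) : p (n + 1) = ((p n).2, (p n).2 + S (G (p n).2 - G (p n).1)) :=
    Function.iterate_succ_apply' _ n _
  refine ⟨fun n => (p n).1, rfl, fun n => ?_, fun n => ?_⟩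
  · simp only [hp n]
    induction n with
    | zero => exact hSR (G 0)
    | succ n ih =>
      rw [hp n]
      convert R.add_mem ih (hSR (G (p n).2 - G (p n).1)) using 1
      simp only [Prod.mk_add_mk, ← smul_add]
      congr 2
      abel
  · simp only [hp n]
    induction n with
    | zero => simpa [p] using hS (G 0)
    | succ n ih =>
      calc ‖(p (n + 1)).2 - (p (n + 1)).1‖ = ‖S (G (p n).2 - G (p n).1)‖ := by simp [hp n]
        _ ≤ ‖G (p n).2 - G (p n).1‖ := hS _
        _ ≤ K * ‖(p n).2 - (p n).1‖ := hG.norm_sub_le _ _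
        _ ≤ K * (‖G 0‖ * K ^ n) := by gcongr
        _ = ‖G 0‖ * K ^ (n + 1) := by ring

theorem lipschitzWith_smul_sub_comp_add_left {κ : ℝ≥0} (hF : LipschitzWith κ fun u => κ • u - F u)
    (z c : X) : LipschitzWith κ fun y => κ • y - (F (z + y) - c) := by
  refine LipschitzWith.of_dist_le_mul fun y y' => ?_
  convert hF.dist_le_mul (z + y) (z + y') using 1
  · simp only [dist_eq_norm, smul_add]
    congr 1
    abel
  · rw [dist_add_left]

theorem continuous_of_approx (hF : ∀ ε > 0, ∃ (κ : ℝ≥0) (G : X → X),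
    LipschitzWith κ (fun u => κ • u - G u) ∧ ∀ u, ‖G u - F u‖ ≤ ε) : Continuous F := by
  refine continuous_of_uniform_approx_of_continuous fun s hs => ?_
  obtain ⟨ε, hε, hεs⟩ := Metric.mem_uniformity_dist.1 hs
  obtain ⟨κ, G, hG, hGF⟩ := hF (ε / 2) (half_pos hε)
  refine ⟨G, ?_, fun u => hεs ?_⟩
  · exact ((continuous_const_smul κ).sub hG.continuous).congr fun u => sub_sub_cancel _ _
  · rw [dist_comm, dist_eq_norm]
    exact (hGF u).trans_lt (half_lt_self hε)

variable [CompleteSpace X]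

theorem IsMAccretive.exists_of_contracting (hR : IsMAccretive R) {lam : ℝ} (hlam : 0 < lam)
    {G : X → X} {K : ℝ≥0} (hG : ContractingWith K G) :
    ∃ z, (z, lam • (G z - z)) ∈ R ∧ ‖z‖ ≤ ‖G 0‖ / (1 - K) := by
  obtain ⟨y, hy₀, hyR, hy⟩ := hR.exists_seq_of_contracting hlam hG.toLipschitzWith
  have hK : (K : ℝ) < 1 := hG.1
  have hdist (n : ℕ) : dist (y n) (y (n + 1)) ≤ ‖G 0‖ * K ^ n := by
    rw [dist_comm, dist_eq_norm]
    exact hy n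
  obtain ⟨z, hz⟩ := cauchySeq_tendsto_of_complete (cauchySeq_of_le_geometric _ _ hK hdist)
  refine ⟨z, ?_, by
    simpa [hy₀] using dist_le_of_le_geometric_of_tendsto₀ _ _ hK hdist hz⟩
  have hz' := hz.comp (tendsto_add_atTop_nat 1)
  have hGz := (hG.toLipschitzWith.continuous.tendsto z).comp hz
  exact hR.isClosed.mem_of_tendsto (hz'.prodMk_nhds ((hGz.sub hz').const_smul lam))
    (Eventually.of_forall hyR)

theorem IsMAccretive.exists_of_lipschitz (hR : IsMAccretive R) {κ : ℝ≥0}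
    (hF : LipschitzWith κ fun u => κ • u - F u) : ∃ z, (z, -z - F z) ∈ R ∧ ‖z‖ ≤ ‖F 0‖ := by
  have hκ : (0 : ℝ) < κ + 1 := by positivity
  have hG : ContractingWith (κ / (κ + 1)) fun u => ((κ : ℝ) + 1)⁻¹ • (κ • u - F u) := by
    refine ⟨(div_lt_one (by positivity)).2 (lt_add_one κ),
      LipschitzWith.of_dist_le_mul fun u v => ?_⟩
    rw [dist_smul₀, Real.norm_of_nonneg (by positivity)]
    refine (mul_le_mul_of_nonneg_left (hF.dist_le_mul u v) (by positivity)).trans_eq ?_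
    push_cast
    ring
  obtain ⟨z, hzR, hz⟩ := hR.exists_of_contracting hκ hG
  refine ⟨z, ?_, hz.trans_eq ?_⟩
  · convert hzR using 2
    rw [smul_sub, smul_inv_smul₀ hκ.ne', add_smul, one_smul, NNReal.smul_def]
    abel
  · have hK : 1 - ((κ / (κ + 1) : ℝ≥0) : ℝ) = (κ + 1 : ℝ)⁻¹ := by
      push_cast
      field_simp
      ring
    rw [hK, smul_zero, zero_sub, norm_smul, norm_neg, Real.norm_of_nonneg (by positivity),
      div_inv_eq_mul, inv_mul_eq_div, div_mul_cancel₀ _ hκ.ne']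

theorem IsMAccretive.exists_seq_of_lipschitz (hR : IsMAccretive R) {G : ℕ → X → X} {κ : ℕ → ℝ≥0}
    (hG : ∀ n, LipschitzWith (κ n) fun u => κ n • u - G n u) {ε : ℕ → ℝ}
    (hε : ∀ n u, ‖G (n + 1) u - G n u‖ ≤ ε n) :
    ∃ z : ℕ → X, ‖z 0‖ ≤ ‖G 0 0‖ ∧ (∀ n, (z n, -z n - G n (z n)) ∈ R) ∧
      ∀ n, ‖z (n + 1) - z n‖ ≤ ε n := by
  have hcorr (n : ℕ) (z : X) :
      ∃ y, (y, -y - (G (n + 1) (z + y) - G n z)) ∈ R ∧ ‖y‖ ≤ ε n := by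
    obtain ⟨y, hyR, hy⟩ := hR.exists_of_lipschitz
      (lipschitzWith_smul_sub_comp_add_left (hG (n + 1)) z (G n z))
    exact ⟨y, hyR, hy.trans (by simpa using hε n z)⟩
  choose y hyR hy using hcorr
  obtain ⟨z₀, hz₀R, hz₀⟩ := hR.exists_of_lipschitz (hG 0)
  let z : ℕ → X := fun n => n.rec z₀ fun n z => z + y n z
  have hz (n : ℕ) : z (n + 1) = z n + y n (z n) := rfl
  refine ⟨z, hz₀, fun n => ?_, fun n => by simpa [hz] using hy n (z n)⟩
  induction n with
  | zero => exact hz₀R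
  | succ n ih =>
    convert R.add_mem ih (hyR n (z n)) using 1
    rw [hz, Prod.mk_add_mk]
    congr 1
    abel

theorem IsMAccretive.exists_of_approx (hR : IsMAccretive R)
    (hF : ∀ ε > 0, ∃ (κ : ℝ≥0) (G : X → X), LipschitzWith κ (fun u => κ • u - G u) ∧
      ∀ u, ‖G u - F u‖ ≤ ε) {δ : ℝ} (hδ : 0 < δ) :
    ∃ z, (z, -z - F z) ∈ R ∧ ‖z‖ ≤ ‖F 0‖ + δ := by
  choose κ G hG hGF using fun n : ℕ => hF (δ / 2 / 2 / 2 / 2 ^ n) (by positivity)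
  have hGG (n : ℕ) (u : X) : ‖G (n + 1) u - G n u‖ ≤ δ / 2 / 2 / 2 ^ n := by
    have := norm_sub_le_norm_sub_add_norm_sub (G (n + 1) u) (F u) (G n u)
    have hn := hGF n u
    have hn' := hGF (n + 1) u
    rw [norm_sub_rev] at hn
    calc ‖G (n + 1) u - G n u‖ ≤ δ / 2 / 2 / 2 / 2 ^ (n + 1) + δ / 2 / 2 / 2 / 2 ^ n := by linarith
      _ ≤ δ / 2 / 2 / 2 / 2 ^ n + δ / 2 / 2 / 2 / 2 ^ n := by
        gcongr
        · norm_num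
        · exact n.le_succ
      _ = δ / 2 / 2 / 2 ^ n := by ring
  obtain ⟨z, hz₀, hzR, hz⟩ := hR.exists_seq_of_lipschitz hG hGG
  have hdist (n : ℕ) : dist (z n) (z (n + 1)) ≤ δ / 2 / 2 / 2 ^ n := by
    rw [dist_comm, dist_eq_norm]
    exact hz n
  obtain ⟨a, ha⟩ := cauchySeq_tendsto_of_complete (cauchySeq_of_le_geometric_two hdist)
  have hGa : Tendsto (fun n => G n (z n)) atTop (𝓝 (F a)) := by
    have herr : Tendsto (fun n => G n (z n) - F (z n)) atTop (𝓝 0) :=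
      squeeze_zero_norm (fun n => hGF n (z n)) (tendsto_const_nhds.div_atTop
        (tendsto_pow_atTop_atTop_of_one_lt one_lt_two))
    simpa using herr.add (((continuous_of_approx hF).tendsto a).comp ha)
  refine ⟨a, hR.isClosed.mem_of_tendsto (ha.prodMk_nhds (ha.neg.sub hGa))
    (Eventually.of_forall hzR), ?_⟩
  have h₀ : ‖G 0 0‖ ≤ ‖F 0‖ + δ / 2 / 2 / 2 := by
    have := norm_le_norm_add_norm_sub' (G 0 0) (F 0)
    have := hGF 0 0
    simp only [pow_zero, div_one] at this
    linarith
  have hlim := dist_le_of_le_geometric_two_of_tendsto₀ hdist ha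
  rw [dist_comm, dist_eq_norm] at hlim
  linarith [norm_le_norm_add_norm_sub' a (z 0)]

end MAccretive

section HeatGraph

variable {N : ℕ} {Ω : Set (Euc N)} {T : ℝ}

/-- The graph `v ↦ ∂ₜv - Δv` of the heat operator in `L^∞(Q_T)`, with zero initial and lateral
data in the weak sense. -/
def heatGraph (hΩb : Bornology.IsBounded Ω) (T : ℝ) :
    AddSubmonoid (Lp ℝ ∞ (volume.restrict (QT Ω T)) × Lp ℝ ∞ (volume.restrict (QT Ω T))) where
  carrier := {z | IsHeatSol Ω T 0 z.1 z.2}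
  add_mem' {z z'} h h' := by
    have hadd := IsHeatSol.add hΩb h h' MemLp.zero MemLp.zero (Lp.memLp z.1) (Lp.memLp z'.1)
      (Lp.memLp z.2) (Lp.memLp z'.2)
    rw [add_zero] at hadd
    exact hadd.congr (Lp.coeFn_add z.1 z'.1).symm (Lp.coeFn_add z.2 z'.2).symm
  zero_mem' := by
    have hzero : IsHeatSol Ω T 0 0 0 := fun ζ _ => by simp
    exact hzero.congr (Lp.coeFn_zero ℝ ∞ _).symm (Lp.coeFn_zero ℝ ∞ _).symm

theorem mem_heatGraph {hΩb : Bornology.IsBounded Ω} {v w : Lp ℝ ∞ (volume.restrict (QT Ω T))} :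
    (v, w) ∈ heatGraph hΩb T ↔ IsHeatSol Ω T 0 v w := Iff.rfl

theorem isClosed_heatGraph (hΩb : Bornology.IsBounded Ω) :
    IsClosed (heatGraph hΩb T : Set (Lp ℝ ∞ (volume.restrict (QT Ω T)) ×
      Lp ℝ ∞ (volume.restrict (QT Ω T)))) := by
  have heq : (heatGraph hΩb T : Set (Lp ℝ ∞ (volume.restrict (QT Ω T)) ×
      Lp ℝ ∞ (volume.restrict (QT Ω T)))) =
      ⋂ (ζ) (_ : TestZero Ω T ζ), {z | ∫ p in QT Ω T, z.1 p * -heatAdj ζ p =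
        (∫ x in Ω, (0 : Euc N → ℝ) x * ζ x 0) + ∫ p in QT Ω T, z.2 p * ζ p.1 p.2} := by
    ext z
    simp only [mem_iInter]
    rfl
  rw [heq]
  refine isClosed_iInter fun ζ => isClosed_iInter fun hζ => isClosed_eq ?_ (continuous_const.add ?_)
  · exact (continuous_integral_lpTop_mul
      (integrableOn_QT_of_continuous hζ.1.continuous_heatAdj.neg hΩb)).comp continuous_fst
  · exact (continuous_integral_lpTop_mul
      (integrableOn_QT_of_continuous hζ.continuous hΩb)).comp continuous_snd

theorem isMAccretive_heatGraph (hΩ : IsOpen Ω) (hΩb : Bornology.IsBounded Ω) (hT : 0 ≤ T) :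
    IsMAccretive (heatGraph hΩb T) where
  isClosed := isClosed_heatGraph hΩb
  exists_resolvent lam hlam h := by
    obtain ⟨v, hvm, hvB, hv⟩ := exists_isHeatSol (B := ‖h‖₊) hΩ hΩb hT hlam.le
      (f := 0) aestronglyMeasurable_zero (Eventually.of_forall fun x => by simp)
      (Lp.aestronglyMeasurable h) ((norm_lpTop_le_iff (norm_nonneg h)).1 le_rfl)
    have hvtop := memLp_top_of_bound hvm ‖h‖ hvB
    have hv' := hvtop.coeFn_toLp
    refine ⟨hvtop.toLp v, (norm_lpTop_le_iff (norm_nonneg h)).2 ?_,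
      mem_heatGraph.2 (hv.congr hv'.symm ?_)⟩
    · filter_upwards [hv', hvB] with p hp hpB
      rwa [hp]
    · filter_upwards [hv', Lp.coeFn_smul lam (h - hvtop.toLp v),
        Lp.coeFn_sub h (hvtop.toLp v)] with p hp hsmul hsub
      rw [hsmul, Pi.smul_apply, hsub, Pi.sub_apply, hp, smul_eq_mul]

end HeatGraph

section Superposition

open scoped BoundedContinuousFunction

variable {α : Type*} [MeasurableSpace α] {m : Measure α} {θ : α → ℝ}

theorem memLp_superposition (hθ : AEStronglyMeasurable θ m) (hθ₁ : ∀ᵐ x ∂m, 1 ≤ θ x)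
    (q : ℝ →ᵇ ℝ) (u : Lp ℝ ∞ m) : MemLp (fun x => (θ x)⁻¹ * q (θ x * u x)) ∞ m := by
  refine memLp_top_of_bound (hθ.inv₀.mul
    (q.continuous.comp_aestronglyMeasurable (hθ.mul (Lp.aestronglyMeasurable u)))) ‖q‖ ?_
  filter_upwards [hθ₁] with x hx
  rw [norm_mul, norm_inv, Real.norm_of_nonneg (zero_le_one.trans hx)]
  exact (mul_le_of_le_one_left (norm_nonneg _) (inv_le_one_of_one_le₀ hx)).trans
    (q.norm_coe_le_norm _)

/-- The superposition operator `u ↦ θ⁻¹ q(θ u)` on `L^∞`; a weight `θ ≥ 1` leaves sup bounds and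
Lipschitz constants of `q` unchanged. -/
def superposition (hθ : AEStronglyMeasurable θ m) (hθ₁ : ∀ᵐ x ∂m, 1 ≤ θ x) (q : ℝ →ᵇ ℝ)
    (u : Lp ℝ ∞ m) : Lp ℝ ∞ m :=
  (memLp_superposition hθ hθ₁ q u).toLp

theorem coeFn_superposition (hθ : AEStronglyMeasurable θ m) (hθ₁ : ∀ᵐ x ∂m, 1 ≤ θ x)
    (q : ℝ →ᵇ ℝ) (u : Lp ℝ ∞ m) :
    superposition hθ hθ₁ q u =ᵐ[m] fun x => (θ x)⁻¹ * q (θ x * u x) :=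
  (memLp_superposition hθ hθ₁ q u).coeFn_toLp

theorem norm_superposition_sub_superposition_le (hθ : AEStronglyMeasurable θ m)
    (hθ₁ : ∀ᵐ x ∂m, 1 ≤ θ x) (q q' : ℝ →ᵇ ℝ) (u : Lp ℝ ∞ m) :
    ‖superposition hθ hθ₁ q u - superposition hθ hθ₁ q' u‖ ≤ ‖q - q'‖ := by
  refine (norm_lpTop_le_iff (norm_nonneg _)).2 ?_
  filter_upwards [Lp.coeFn_sub (superposition hθ hθ₁ q u) (superposition hθ hθ₁ q' u),
    coeFn_superposition hθ hθ₁ q u, coeFn_superposition hθ hθ₁ q' u, hθ₁] with x hsub hq hq' hx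
  rw [hsub, Pi.sub_apply, hq, hq', ← mul_sub, abs_mul, abs_of_nonneg (by positivity)]
  exact (mul_le_of_le_one_left (abs_nonneg _) (inv_le_one_of_one_le₀ hx)).trans
    ((q - q').norm_coe_le_norm _)

theorem abs_mul_sub_sub_le_of_monotone_of_lipschitz {q : ℝ → ℝ} (hq : Monotone q) {κ : ℝ≥0}
    (hκ : LipschitzWith κ q) {c : ℝ} (hc : 0 < c) (a b : ℝ) :
    |(κ * a - c⁻¹ * q (c * a)) - (κ * b - c⁻¹ * q (c * b))| ≤ κ * |a - b| := by
  wlog hab : b ≤ a generalizing a b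
  · rw [abs_sub_comm, abs_sub_comm a b]
    exact this b a (le_of_not_ge hab)
  have hmono : 0 ≤ q (c * a) - q (c * b) := sub_nonneg.2 (hq (by gcongr))
  have hlip : q (c * a) - q (c * b) ≤ κ * (c * (a - b)) := by
    have := (le_abs_self _).trans (hκ.dist_le_mul (c * a) (c * b))
    rwa [Real.dist_eq, ← mul_sub, abs_of_nonneg (by nlinarith)] at this
  have hquot : c⁻¹ * (q (c * a) - q (c * b)) ≤ κ * (a - b) := by
    rw [inv_mul_le_iff₀ hc]
    linarith
  have hquot₀ : 0 ≤ c⁻¹ * (q (c * a) - q (c * b)) := by positivity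
  rw [abs_of_nonneg (sub_nonneg.2 hab), abs_le]
  constructor <;> linarith

theorem lipschitzWith_smul_sub_superposition (hθ : AEStronglyMeasurable θ m)
    (hθ₁ : ∀ᵐ x ∂m, 1 ≤ θ x) {q : ℝ →ᵇ ℝ} (hq : Monotone q) {κ : ℝ≥0} (hκ : LipschitzWith κ q) :
    LipschitzWith κ fun u => κ • u - superposition hθ hθ₁ q u := by
  refine LipschitzWith.of_dist_le_mul fun u v => ?_
  rw [dist_eq_norm, dist_eq_norm]
  refine (norm_lpTop_le_iff (by positivity)).2 ?_
  have hcoe (u : Lp ℝ ∞ m) : (κ • u - superposition hθ hθ₁ q u : Lp ℝ ∞ m) =ᵐ[m]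
      fun x => κ * u x - (θ x)⁻¹ * q (θ x * u x) := by
    filter_upwards [Lp.coeFn_sub (κ • u) (superposition hθ hθ₁ q u),
      Lp.coeFn_smul (κ : ℝ) u, coeFn_superposition hθ hθ₁ q u] with x hsub hsmul hq
    rw [hsub, Pi.sub_apply, hq, NNReal.smul_def, hsmul, Pi.smul_apply, smul_eq_mul]
  filter_upwards [Lp.coeFn_sub (κ • u - superposition hθ hθ₁ q u)
    (κ • v - superposition hθ hθ₁ q v), hcoe u, hcoe v, hθ₁, Lp.coeFn_sub u v,
    (norm_lpTop_le_iff (norm_nonneg (u - v))).1 le_rfl] with x hsub hu hv hx huv hle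
  rw [huv, Pi.sub_apply] at hle
  rw [hsub, Pi.sub_apply, hu, hv]
  exact (abs_mul_sub_sub_le_of_monotone_of_lipschitz hq hκ (zero_lt_one.trans_le hx) _ _).trans
    (by gcongr)

end Superposition

section Steklov

open scoped BoundedContinuousFunction

variable {q : ℝ → ℝ} {δ : ℝ}

/-- The backward Steklov average of `q` with step `δ`, a Lipschitz approximation of `q` which
preserves monotonicity. -/
def steklovAverage (δ : ℝ) (q : ℝ → ℝ) (x : ℝ) : ℝ := δ⁻¹ * ∫ y in (x - δ)..x, q y

theorem steklovAverage_eq_integral (hδ : δ ≠ 0) (q : ℝ → ℝ) (x : ℝ) :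
    steklovAverage δ q x = ∫ y in (0 : ℝ)..1, q (x - δ * y) := by
  rw [intervalIntegral.integral_comp_sub_mul _ hδ, mul_one, mul_zero, sub_zero]
  rfl

theorem monotone_steklovAverage (hδ : 0 < δ) (hq : Monotone q) :
    Monotone (steklovAverage δ q) := fun x x' hx => by
  have hint (x : ℝ) : IntervalIntegrable (fun y => q (x - δ * y)) volume 0 1 :=
    (hq.comp_antitone fun y y' hy =>
      sub_le_sub_left (mul_le_mul_of_nonneg_left hy hδ.le) x).intervalIntegrable
  rw [steklovAverage_eq_integral hδ.ne', steklovAverage_eq_integral hδ.ne']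
  exact intervalIntegral.integral_mono zero_le_one (hint x) (hint x') fun y => hq (by linarith)

theorem lipschitzWith_steklovAverage (hδ : 0 ≤ δ) (hq : ∀ a b, IntervalIntegrable q volume a b)
    {C : ℝ≥0} (hC : ∀ x, |q x| ≤ C) :
    LipschitzWith (δ⁻¹.toNNReal * (2 * C)) (steklovAverage δ q) := by
  refine LipschitzWith.of_dist_le_mul fun x x' => ?_
  have hbound (a b : ℝ) : |∫ y in a..b, q y| ≤ C * |b - a| := by
    rw [← Real.norm_eq_abs]
    exact intervalIntegral.norm_integral_le_of_norm_le_const fun y _ => hC y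
  have htri := abs_sub (∫ y in (x - δ)..(x' - δ), q y) (∫ y in x..x', q y)
  have h₁ := hbound (x - δ) (x' - δ)
  have h₂ := hbound x x'
  rw [sub_sub_sub_cancel_right, abs_sub_comm] at h₁
  rw [abs_sub_comm] at h₂
  rw [Real.dist_eq, Real.dist_eq, steklovAverage, steklovAverage, ← mul_sub,
    intervalIntegral.integral_interval_sub_interval_comm (hq _ _) (hq _ _) (hq _ _), abs_mul,
    abs_of_nonneg (inv_nonneg.2 hδ), NNReal.coe_mul, Real.coe_toNNReal _ (inv_nonneg.2 hδ),
    mul_assoc]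
  gcongr
  push_cast
  linarith

theorem abs_steklovAverage_sub_le (hδ : 0 < δ) (hq : Continuous q) {ε : ℝ} {x : ℝ}
    (hε : ∀ y, |y - x| ≤ δ → |q y - q x| ≤ ε) : |steklovAverage δ q x - q x| ≤ ε := by
  have hint : IntervalIntegrable (fun y => q (x - δ * y)) volume 0 1 :=
    (hq.comp (by fun_prop)).intervalIntegrable 0 1
  have hsub : steklovAverage δ q x - q x = ∫ y in (0 : ℝ)..1, (q (x - δ * y) - q x) := by
    rw [intervalIntegral.integral_sub hint intervalIntegrable_const,
      steklovAverage_eq_integral hδ.ne', intervalIntegral.integral_const, sub_zero, one_smul]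
  rw [hsub, ← Real.norm_eq_abs]
  refine (intervalIntegral.norm_integral_le_of_norm_le_const (C := ε) fun y hy => hε _ ?_).trans_eq
    (by rw [sub_zero, abs_one, mul_one])
  rw [uIoc_of_le zero_le_one] at hy
  rw [sub_sub_cancel_left, abs_neg, abs_of_nonneg (mul_nonneg hδ.le hy.1.le)]
  exact mul_le_of_le_one_right hδ.le hy.2

theorem exists_monotone_lipschitz_approx {q : ℝ →ᵇ ℝ} (hq : Monotone q)
    (huc : UniformContinuous q) {ε : ℝ} (hε : 0 < ε) :
    ∃ (κ : ℝ≥0) (q' : ℝ →ᵇ ℝ), Monotone q' ∧ LipschitzWith κ q' ∧ ‖q' - q‖ ≤ ε := by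
  obtain ⟨δ, hδ, hd⟩ := Metric.uniformContinuous_iff_le.1 huc ε hε
  have happrox (x : ℝ) : |steklovAverage δ q x - q x| ≤ ε :=
    abs_steklovAverage_sub_le hδ q.continuous fun y hy => hd hy
  have hlip : LipschitzWith (δ⁻¹.toNNReal * (2 * ‖q‖₊)) (steklovAverage δ q) :=
    lipschitzWith_steklovAverage hδ.le (fun a b => q.continuous.intervalIntegrable a b)
      q.norm_coe_le_norm
  have hbound (x : ℝ) : ‖steklovAverage δ q x‖ ≤ ‖q‖ + ε :=
    (norm_le_norm_add_norm_sub' _ (q x)).trans (add_le_add (q.norm_coe_le_norm x) (happrox x))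
  exact ⟨_, .ofNormedAddCommGroup _ hlip.continuous _ hbound, monotone_steklovAverage hδ hq, hlip,
    (BoundedContinuousFunction.norm_le hε.le).2 happrox⟩

end Steklov

section SemilinearProblem

open scoped BoundedContinuousFunction

variable {N : ℕ} {Ω : Set (Euc N)} {T : ℝ} {f : Euc N → ℝ} {g : ℝ → ℝ} {θ : Euc N × ℝ → ℝ}
  {B : ℝ≥0}

theorem exists_mem_heatGraph_superposition (hΩ : IsOpen Ω) (hΩb : Bornology.IsBounded Ω)
    (hT : 0 ≤ T) (hθ : AEStronglyMeasurable θ (volume.restrict (QT Ω T)))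
    (hθ₁ : ∀ᵐ p ∂volume.restrict (QT Ω T), 1 ≤ θ p) {q : ℝ →ᵇ ℝ} (hq : Monotone q)
    (huc : UniformContinuous q) (v₀ : Lp ℝ ∞ (volume.restrict (QT Ω T))) {δ : ℝ} (hδ : 0 < δ) :
    ∃ z, (z, -z - superposition hθ hθ₁ q (v₀ + z)) ∈ heatGraph hΩb T ∧
      ‖z‖ ≤ ‖superposition hθ hθ₁ q v₀‖ + δ := by
  have happrox : ∀ ε > 0, ∃ (κ : ℝ≥0) (G : Lp ℝ ∞ (volume.restrict (QT Ω T)) → Lp ℝ ∞ _),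
      LipschitzWith κ (fun z => κ • z - G z) ∧
      ∀ z, ‖G z - superposition hθ hθ₁ q (v₀ + z)‖ ≤ ε := fun ε hε => by
    obtain ⟨κ, q', hq', hκ, hle⟩ := exists_monotone_lipschitz_approx hq huc hε
    refine ⟨κ, fun z => superposition hθ hθ₁ q' (v₀ + z), ?_, fun z =>
      (norm_superposition_sub_superposition_le hθ hθ₁ q' q (v₀ + z)).trans hle⟩
    simpa only [sub_zero] using lipschitzWith_smul_sub_comp_add_left
      (lipschitzWith_smul_sub_superposition hθ hθ₁ hq' hκ) v₀ 0
  simpa only [add_zero] using (isMAccretive_heatGraph hΩ hΩb hT).exists_of_approx happrox hδ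

theorem exists_lpTop_isHeatSol_neg (hΩ : IsOpen Ω) (hΩb : Bornology.IsBounded Ω)
    (hT : 0 ≤ T) (hf : AEStronglyMeasurable f (volume.restrict Ω))
    (hfB : ∀ᵐ x ∂volume.restrict Ω, |f x| ≤ B) :
    ∃ v : Lp ℝ ∞ (volume.restrict (QT Ω T)), ‖v‖ ≤ B ∧
      IsHeatSol Ω T f v (-v : Lp ℝ ∞ (volume.restrict (QT Ω T))) := by
  obtain ⟨v, hvm, hvB, hv⟩ := exists_isHeatSol hΩ hΩb hT zero_le_one hf hfB
    (h := 0) aestronglyMeasurable_zero (Eventually.of_forall fun p => by simp)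
  have hvtop := memLp_top_of_bound hvm B hvB
  have hv' := hvtop.coeFn_toLp
  refine ⟨hvtop.toLp v, (norm_lpTop_le_iff B.2).2 ?_, hv.congr hv'.symm ?_⟩
  · filter_upwards [hv', hvB] with p hp hpB
    rwa [hp]
  · filter_upwards [Lp.coeFn_neg (hvtop.toLp v), hv'] with p hneg hp
    rw [hneg, Pi.neg_apply, hp, Pi.zero_apply, zero_sub, one_mul]

/-- Splitting off the solution `v₀` of the equation without the nonlinear term moves the initial
datum into the nonlinearity. -/
theorem exists_isHeatSol_superposition (hΩ : IsOpen Ω) (hΩb : Bornology.IsBounded Ω)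
    (hT : 0 ≤ T) (hf : AEStronglyMeasurable f (volume.restrict Ω))
    (hfB : ∀ᵐ x ∂volume.restrict Ω, |f x| ≤ B)
    (hθ : AEStronglyMeasurable θ (volume.restrict (QT Ω T)))
    (hθ₁ : ∀ᵐ p ∂volume.restrict (QT Ω T), 1 ≤ θ p) {q : ℝ →ᵇ ℝ} (hq : Monotone q)
    (huc : UniformContinuous q) {M : ℝ} (hM : 0 ≤ M)
    (hqM : ∀ᵐ p ∂volume.restrict (QT Ω T), ∀ r : ℝ, |r| ≤ B → |q (θ p * r)| ≤ M)
    {δ : ℝ} (hδ : 0 < δ) :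
    ∃ V : Lp ℝ ∞ (volume.restrict (QT Ω T)), ‖V‖ ≤ B + M + δ ∧
      IsHeatSol Ω T f V fun p => -V p - (θ p)⁻¹ * q (θ p * V p) := by
  obtain ⟨v₀, hv₀, hv₀sol⟩ := exists_lpTop_isHeatSol_neg hΩ hΩb hT hf hfB
  obtain ⟨z, hz, hzle⟩ := exists_mem_heatGraph_superposition hΩ hΩb hT hθ hθ₁ hq huc v₀ hδ
  have hN : ‖superposition hθ hθ₁ q v₀‖ ≤ M := (norm_lpTop_le_iff hM).2 <| by
    filter_upwards [coeFn_superposition hθ hθ₁ q v₀, (norm_lpTop_le_iff B.2).1 hv₀, hqM, hθ₁]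
      with p hp hpB hpM hp₁
    rw [hp, abs_mul, abs_of_nonneg (by positivity)]
    exact (mul_le_of_le_one_left (abs_nonneg _) (inv_le_one_of_one_le₀ hp₁)).trans (hpM _ hpB)
  refine ⟨v₀ + z, (norm_add_le v₀ z).trans (by linarith), ?_⟩
  have hsum := hv₀sol.add hΩb (mem_heatGraph.1 hz) (memLp_top_of_bound hf B hfB) MemLp.zero
    (Lp.memLp _) (Lp.memLp _) (Lp.memLp _) (Lp.memLp _)
  rw [add_zero] at hsum
  refine hsum.congr (Lp.coeFn_add v₀ z).symm ?_
  filter_upwards [Lp.coeFn_neg v₀, Lp.coeFn_neg z, Lp.coeFn_add v₀ z,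
    Lp.coeFn_sub (-z) (superposition hθ hθ₁ q (v₀ + z)),
    coeFn_superposition hθ hθ₁ q (v₀ + z)] with p hnegv hnegz hadd hsub hN
  rw [Pi.add_apply, hsub, Pi.sub_apply, hN, hnegv, hnegz, hadd]
  simp only [Pi.neg_apply, Pi.add_apply]
  ring

theorem exists_boundedContinuousFunction_eqOn_Icc (hg : Continuous g) (hgm : Monotone g) {a b : ℝ}
    (hab : a ≤ b) : ∃ q : ℝ →ᵇ ℝ, Monotone q ∧ UniformContinuous q ∧ EqOn q g (Icc a b) := by
  let G : C(Icc a b, ℝ) := ⟨fun x => g x, hg.comp continuous_subtype_val⟩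
  refine ⟨(BoundedContinuousFunction.mkOfCompact G).compContinuous
    ⟨projIcc a b hab, continuous_projIcc⟩, fun x y hxy => hgm (monotone_projIcc hab hxy), ?_,
    fun x hx => congrArg g (congrArg Subtype.val (projIcc_of_mem hab hx))⟩
  exact (CompactSpace.uniformContinuous_of_continuous G.continuous).comp
    (LipschitzWith.projIcc hab).uniformContinuous

theorem exists_isHeatSol_of_monotone (hΩ : IsOpen Ω) (hΩb : Bornology.IsBounded Ω)
    (hT : 0 ≤ T) (hg : Continuous g) (hgm : Monotone g)
    (hf : AEStronglyMeasurable f (volume.restrict Ω)) (hfB : ∀ᵐ x ∂volume.restrict Ω, |f x| ≤ B)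
    (hθ : AEStronglyMeasurable θ (volume.restrict (QT Ω T)))
    (hθ₁ : ∀ᵐ p ∂volume.restrict (QT Ω T), 1 ≤ θ p) {C : ℝ} (hC : 0 ≤ C)
    (hθC : ∀ᵐ p ∂volume.restrict (QT Ω T), θ p ≤ C) :
    ∃ V : Lp ℝ ∞ (volume.restrict (QT Ω T)),
      IsHeatSol Ω T f V fun p => -V p - (θ p)⁻¹ * g (θ p * V p) := by
  have hmul {c r D : ℝ} (hc₁ : 1 ≤ c) (hcC : c ≤ C) (hr : |r| ≤ D) :
      c * r ∈ Icc (-(C * D)) (C * D) := by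
    rw [mem_Icc, ← abs_le, abs_mul, abs_of_nonneg (zero_le_one.trans hc₁)]
    gcongr
  obtain ⟨M, hM⟩ := (isCompact_Icc (a := -(C * B)) (b := C * B)).exists_bound_of_continuousOn
    hg.continuousOn
  have hCB : 0 ≤ C * B := by positivity
  have hM₀ : 0 ≤ M := (norm_nonneg _).trans (hM 0 ⟨by linarith, hCB⟩)
  have hle : C * B ≤ C * (B + M + 1) := by gcongr; linarith
  obtain ⟨q, hqm, huc, hqg⟩ := exists_boundedContinuousFunction_eqOn_Icc hg hgm
    (a := -(C * (B + M + 1))) (b := C * (B + M + 1)) (by linarith)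
  have hqM : ∀ᵐ p ∂volume.restrict (QT Ω T), ∀ r : ℝ, |r| ≤ B → |q (θ p * r)| ≤ M := by
    filter_upwards [hθ₁, hθC] with p hp₁ hpC r hr
    have hmem := hmul hp₁ hpC hr
    rw [hqg (Icc_subset_Icc (neg_le_neg hle) hle hmem)]
    exact hM _ hmem
  obtain ⟨V, hV, hVsol⟩ :=
    exists_isHeatSol_superposition hΩ hΩb hT hf hfB hθ hθ₁ hqm huc hM₀ hqM one_pos
  refine ⟨V, hVsol.congr ae_eq_rfl ?_⟩
  filter_upwards [hθ₁, hθC, (norm_lpTop_le_iff (by positivity)).1 hV] with p hp₁ hpC hpV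
  rw [hqg (hmul hp₁ hpC hpV)]

theorem memLp_top_comp {E : Type*} [MeasurableSpace E] {m : Measure E} {u : E → ℝ}
    (hg : Continuous g) (hu : MemLp u ∞ m) : MemLp (fun x => g (u x)) ∞ m := by
  obtain ⟨M, hM⟩ := (isCompact_Icc (a := -lpNorm u ∞ m) (b := lpNorm u ∞ m))
    |>.exists_bound_of_continuousOn hg.continuousOn
  refine memLp_top_of_bound (hg.comp_aestronglyMeasurable hu.aestronglyMeasurable) M ?_
  filter_upwards [ae_le_lpNorm_exponent_top hu] with x hx
  exact hM _ (abs_le.1 hx)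

/-- The substitution `u = eᵗ V`, tested against `ζ` and `eᵗ ζ` respectively, removes the zeroth
order term of the equation for `V`. -/
theorem IsHeatSol.integral_exp_mul (hΩb : Bornology.IsBounded Ω) (hg : Continuous g)
    {V : Euc N × ℝ → ℝ} (hVtop : MemLp V ∞ (volume.restrict (QT Ω T)))
    (hutop : MemLp (fun p => Real.exp p.2 * V p) ∞ (volume.restrict (QT Ω T)))
    (hV : IsHeatSol Ω T f V fun p => -V p - (Real.exp p.2)⁻¹ * g (Real.exp p.2 * V p))
    {ζ : Euc N → ℝ → ℝ} (hζ : TestZero Ω T ζ) :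
    ∫ p in QT Ω T, (-(Real.exp p.2 * V p) * deriv (ζ p.1) p.2 -
      Real.exp p.2 * V p * lap (fun y => ζ y p.2) p.1 + ζ p.1 p.2 * g (Real.exp p.2 * V p)) =
      ∫ x in Ω, f x * ζ x 0 := by
  have hξ := hζ.mul_left Real.contDiff_exp
  have hcancel (p : Euc N × ℝ) : (-V p - (Real.exp p.2)⁻¹ * g (Real.exp p.2 * V p)) *
      (Real.exp p.2 * ζ p.1 p.2) = -(V p * (Real.exp p.2 * ζ p.1 p.2)) -
        g (Real.exp p.2 * V p) * ζ p.1 p.2 := by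
    have := Real.exp_ne_zero p.2
    field_simp
  have hweak := hV _ hξ
  simp only [hcancel, Real.exp_zero, one_mul] at hweak
  rw [← sub_eq_iff_eq_add, ← integral_sub] at hweak
  · rw [← hweak]
    congr with p
    rw [hζ.1.heatAdj_mul_left Real.contDiff_exp, Real.deriv_exp, heatAdj]
    ring
  · exact integrable_mul_of_memLp_top hVtop
      (integrableOn_QT_of_continuous hξ.1.continuous_heatAdj.neg hΩb)
  · exact (integrable_mul_of_memLp_top hVtop
      (integrableOn_QT_of_continuous hξ.continuous hΩb)).neg.sub
      (integrable_mul_of_memLp_top (memLp_top_comp hg hutop)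
        (integrableOn_QT_of_continuous hζ.continuous hΩb))

theorem goodMeasure_withDensity_of_le (hΩ : IsOpen Ω) (hΩb : Bornology.IsBounded Ω) (hT : 0 ≤ T)
    (hg : Continuous g) (hgm : Monotone g) {f : Euc N → ℝ≥0} (hf : Measurable f)
    (hfB : ∀ x, f x ≤ B) :
    GoodMeasure Ω T g ((volume.restrict Ω).withDensity fun x => f x) := by
  have hQb : Bornology.IsBounded (QT Ω T) := hΩb.prod (Metric.isBounded_Ioo 0 T)
  have hexp : Continuous fun p : Euc N × ℝ => Real.exp p.2 := by fun_prop
  have hexp_ge : ∀ᵐ p ∂volume.restrict (QT Ω T), 1 ≤ Real.exp p.2 :=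
    ae_restrict_of_forall_mem (measurableSet_QT hΩ) fun p hp => Real.one_le_exp hp.2.1.le
  have hexp_le : ∀ᵐ p ∂volume.restrict (QT Ω T), Real.exp p.2 ≤ Real.exp T :=
    ae_restrict_of_forall_mem (measurableSet_QT hΩ) fun p hp => Real.exp_le_exp.2 hp.2.2.le
  have hfB' (x : Euc N) : |(f x : ℝ)| ≤ B := by simpa using hfB x
  obtain ⟨V, hV⟩ := exists_isHeatSol_of_monotone hΩ hΩb hT hg hgm
    hf.coe_nnreal_real.aestronglyMeasurable (Eventually.of_forall hfB') hexp.aestronglyMeasurable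
    hexp_ge (Real.exp_nonneg T) hexp_le
  have hu : MemLp (fun p => Real.exp p.2 * V p) ∞ (volume.restrict (QT Ω T)) :=
    (Lp.memLp V).mul (memLp_of_continuous_of_isBounded hQb hexp ∞)
  refine ⟨fun p => Real.exp p.2 * V p, ?_, ?_, fun ζ hζ => ?_⟩
  · simpa only [IntegrableOn, mul_comm] using integrable_mul_of_memLp_top (Lp.memLp V)
      (integrableOn_QT_of_continuous hexp hΩb)
  · exact integrable_mul_of_memLp_top (memLp_top_comp hg hu) (integrableOn_QT_of_continuous
      ((Metric.continuous_infDist_pt _).comp continuous_fst) hΩb)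
  · rw [hV.integral_exp_mul hΩb hg (Lp.memLp V) hu hζ, integral_withDensity_eq_integral_smul hf]
    rfl

end SemilinearProblem

section ReducedMeasure

variable {N : ℕ} {Ω : Set (Euc N)} {T : ℝ} {g : ℝ → ℝ} {μ ν μstar : Measure (Euc N)}

theorem MemM1.sigmaFinite (hμ : MemM1 Ω μ) (hΩ : IsOpen Ω) (hΩb : Bornology.IsBounded Ω) :
    SigmaFinite μ := by
  obtain ⟨F, hFclosed, hFΩ, hFunion, -⟩ := hΩ.exists_iUnion_isClosed
  refine ⟨⟨⟨fun n => F n ∪ Ωᶜ, fun _ => trivial, fun n => ?_, ?_⟩⟩⟩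
  · refine (measure_union_le _ _).trans_lt ?_
    rw [hμ.1, add_zero]
    exact hμ.2.1 _ (hFΩ n)
      (Metric.isCompact_of_isClosed_isBounded (hFclosed n) (hΩb.subset (hFΩ n)))
  · rw [← iUnion_union, hFunion, union_compl_self]

theorem MemM1.mono (hμ : MemM1 Ω μ) (hν : ν ≤ μ) : MemM1 Ω ν :=
  ⟨nonpos_iff_eq_zero.1 ((hν Ωᶜ).trans_eq hμ.1), fun K hK hKc => (hν K).trans_lt (hμ.2.1 K hK hKc),
    (lintegral_mono' hν le_rfl).trans_lt hμ.2.2⟩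

theorem hausN_absolutelyContinuous_volume : (hausN : Measure (Euc N)) ≪ volume := by
  have hhaar := isAddHaarMeasure_hausdorffMeasure (E := Euc N)
  rw [finrank_euclideanSpace_fin] at hhaar
  unfold hausN
  exact Measure.absolutelyContinuous_isAddHaarMeasure _ volume

theorem iSup_lintegral_min_natCast {α : Type*} [MeasurableSpace α] (m : Measure α)
    {φ : α → ℝ≥0∞} (hφ : Measurable φ) :
    ⨆ n : ℕ, ∫⁻ x, min (φ x) n ∂m = ∫⁻ x, φ x ∂m := by
  rw [← lintegral_iSup (fun n => hφ.min measurable_const)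
    fun n k hnk x => min_le_min le_rfl (by gcongr)]
  congr with x
  rw [← inf_iSup_eq, ENNReal.iSup_natCast, inf_top_eq]

theorem IsReducedMeasure.withDensity_min_le (hred : IsReducedMeasure Ω T g μ μstar)
    (hΩ : IsOpen Ω) (hΩb : Bornology.IsBounded Ω) (hT : 0 ≤ T) (hg : Continuous g)
    (hgm : Monotone g) (hμ : MemM1 Ω μ) {φ : Euc N → ℝ≥0∞} (hφ : Measurable φ)
    (hφμ : (volume.restrict Ω).withDensity φ ≤ μ) (n : ℕ) :
    (volume.restrict Ω).withDensity (fun x => min (φ x) n) ≤ μstar := by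
  have hle : (volume.restrict Ω).withDensity (fun x => min (φ x) n) ≤ μ :=
    (withDensity_mono (Eventually.of_forall fun x => min_le_left _ _)).trans hφμ
  have hfin (x : Euc N) : min (φ x) n ≠ ∞ := (min_lt_of_right_lt (ENNReal.natCast_lt_top n)).ne
  have hgood := goodMeasure_withDensity_of_le (B := n) hΩ hΩb hT hg hgm
    (hφ.min measurable_const).ennreal_toNNReal fun x =>
      ENNReal.toNNReal_mono (ENNReal.natCast_ne_top n) (min_le_right (φ x) n)
  simp only [ENNReal.coe_toNNReal (hfin _)] at hgood
  exact hred.2.2.2 _ (hμ.mono hle) hgood hle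

theorem IsReducedMeasure.withDensity_le (hred : IsReducedMeasure Ω T g μ μstar)
    (hΩ : IsOpen Ω) (hΩb : Bornology.IsBounded Ω) (hT : 0 ≤ T) (hg : Continuous g)
    (hgm : Monotone g) (hμ : MemM1 Ω μ) {φ : Euc N → ℝ≥0∞} (hφ : Measurable φ)
    (hφμ : (volume.restrict Ω).withDensity φ ≤ μ) :
    (volume.restrict Ω).withDensity φ ≤ μstar := by
  refine Measure.le_iff.2 fun A hA => ?_
  rw [withDensity_apply _ hA, ← iSup_lintegral_min_natCast _ hφ]
  refine iSup_le fun n => ?_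
  rw [← withDensity_apply _ hA]
  exact hred.withDensity_min_le hΩ hΩb hT hg hgm hμ hφ hφμ n A

end ReducedMeasure

theorem stmt_11_general {N : ℕ} {Ω : Set (Euc N)} {T : ℝ} {g : ℝ → ℝ}
    {μ μstar : Measure (Euc N)} (hΩ : IsOpen Ω) (hΩb : Bornology.IsBounded Ω) (hT : 0 ≤ T)
    (hg : Continuous g) (hgm : Monotone g) (hμ : MemM1 Ω μ)
    (hred : IsReducedMeasure Ω T g μ μstar) :
    ∃ E : Set (Euc N), MeasurableSet E ∧ E ⊆ Ω ∧ hausN E = 0 ∧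
      ∀ A : Set (Euc N), MeasurableSet A → A ⊆ Ω \ E → μ A = μstar A := by
  have := hμ.sigmaFinite hΩ hΩb
  obtain ⟨s, hs, hsing, hvol⟩ := Measure.mutuallySingular_singularPart μ (volume : Measure (Euc N))
  have hac : (volume.restrict Ω).withDensity (μ.rnDeriv volume) ≤ μstar := by
    refine hred.withDensity_le hΩ hΩb hT hg hgm hμ (Measure.measurable_rnDeriv μ volume) ?_
    rw [← restrict_withDensity hΩ.measurableSet]
    exact Measure.restrict_le_self.trans (Measure.withDensity_rnDeriv_le μ volume)
  refine ⟨sᶜ ∩ Ω, hs.compl.inter hΩ.measurableSet, inter_subset_right,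
    hausN_absolutelyContinuous_volume (measure_mono_null inter_subset_left hvol),
    fun A hA hAs => le_antisymm ?_ (hred.2.1 A)⟩
  have hAs' : A ⊆ s := fun x hx => by_contra fun hxs => (hAs hx).2 ⟨hxs, (hAs hx).1⟩
  calc μ A = (volume.withDensity (μ.rnDeriv volume)) A := by
        conv_lhs => rw [Measure.haveLebesgueDecomposition_add μ volume]
        rw [Measure.add_apply, measure_mono_null hAs' hsing, zero_add]
    _ = ((volume.restrict Ω).withDensity (μ.rnDeriv volume)) A := by
        rw [← restrict_withDensity hΩ.measurableSet, Measure.restrict_apply hA,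
          inter_eq_self_of_subset_left fun x hx => (hAs hx).1]
    _ ≤ μstar A := hac A

/-- **Corollary 2.15.** `μ` and its reduced measure `μ*` differ only on a Borel
set of zero `N`-dimensional Hausdorff measure. -/
theorem stmt_11 {N : ℕ} (hN : 1 ≤ N) (Ω : Set (Euc N)) (hΩo : IsOpen Ω)
    (hΩc : IsConnected Ω) (hΩb : Bornology.IsBounded Ω) (T : ℝ) (hT : 0 < T)
    (g : ℝ → ℝ) (hg : GoodG g) (μ μstar : Measure (Euc N)) (hμ : MemM1 Ω μ)
    (hred : IsReducedMeasure Ω T g μ μstar) :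
    ∃ E : Set (Euc N), MeasurableSet E ∧ E ⊆ Ω ∧ hausN E = 0 ∧
      ∀ A : Set (Euc N), MeasurableSet A → A ⊆ Ω \ E → μ A = μstar A :=
  stmt_11_general hΩo hΩb hT.le hg.1 hg.2.1 hμ hred
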